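/- cap_p T = cap_p^F T, where cap_p^F T := inf_{ρ ∈ F} ∫_T ρ^p dμ and F is the collection of all nonnegative Borel functions ρ on T for which ρ ∘ π is a p-weak upper gradient of some f ∈ N^{1,p}_loc(T̃) with f ∘ τ − f = 1 almost everywhere. -/

import Mathlib

open MeasureTheory Metric Set Filter Topology
open scoped ENNReal NNReal unitInterval

noncomputable section

namespace Duality

/-! ### Rectifiable curves, line integrals and upper gradients

A rectifiable path is encoded by its arclength-type parametrization: a `1`-Lipschitz
map defined on a compact interval `[a, b]`.  The line integral `∫_γ ρ ds` of a
nonnegative Borel function is then the Lebesgue integral of `ρ ∘ γ` over `[a, b]`. -/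

structure UPath (X : Type*) [PseudoMetricSpace X] where
  a : ℝ
  b : ℝ
  hab : a ≤ b
  toFun : ℝ → X
  lip : LipschitzOnWith 1 toFun (Set.Icc a b)

namespace UPath

variable {X : Type*} [PseudoMetricSpace X]

/-- starting point of the path -/
def start (γ : UPath X) : X := γ.toFun γ.a

/-- end point of the path -/
def finish (γ : UPath X) : X := γ.toFun γ.b

/-- The line integral `∫_γ ρ ds`. -/
def integral (γ : UPath X) (ρ : X → ℝ≥0∞) : ℝ≥0∞ :=
  ∫⁻ t in Set.Icc γ.a γ.b, ρ (γ.toFun t)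

/-- The image (trace) `|γ|` of the path. -/
def trace (γ : UPath X) : Set X := γ.toFun '' Set.Icc γ.a γ.b

/-- The length of the path. -/
def length (γ : UPath X) : ℝ≥0∞ := eVariationOn γ.toFun (Set.Icc γ.a γ.b)

/-- The path stays inside the set `W`. -/
def InSet (γ : UPath X) (W : Set X) : Prop := ∀ t ∈ Set.Icc γ.a γ.b, γ.toFun t ∈ W

/-- The reparametrization of a rectifiable path as a `Path` (continuous map from `[0,1]`). -/
def toPath (γ : UPath X) : Path γ.start γ.finish where
  toFun := fun t => γ.toFun (γ.a + (t : ℝ) * (γ.b - γ.a))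
  continuous_toFun := by
    have hmem : ∀ t : unitInterval, γ.a + (t : ℝ) * (γ.b - γ.a) ∈ Set.Icc γ.a γ.b := by
      intro t
      obtain ⟨ht0, ht1⟩ := t.2
      constructor
      · nlinarith [γ.hab]
      · nlinarith [γ.hab]
    exact γ.lip.continuousOn.comp_continuous (by continuity) hmem
  source' := by simp [start]
  target' := by simp [finish]

end UPath

/-- `ρ` is an upper gradient of `u`. -/
def IsUpperGradient {X : Type*} [PseudoMetricSpace X] {Y : Type*} [PseudoEMetricSpace Y]
    (u : X → Y) (ρ : X → ℝ≥0∞) : Prop :=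
  ∀ γ : UPath X, edist (u γ.start) (u γ.finish) ≤ γ.integral ρ

/-- The `p`-modulus of a family of (rectifiable) paths. -/
def pathMod {X : Type*} [PseudoMetricSpace X] [MeasurableSpace X]
    (μ : Measure X) (p : ℝ) (Γ : Set (UPath X)) : ℝ≥0∞ :=
  ⨅ (ρ : X → ℝ≥0∞) (_ : Measurable ρ ∧ ∀ γ ∈ Γ, 1 ≤ γ.integral ρ),
    ∫⁻ x, ρ x ^ p ∂μ

/-- `ρ` is a `p`-weak upper gradient of `u`: the upper gradient inequality may fail
only on a path family of zero `p`-modulus. -/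
def IsWeakUpperGradient {X : Type*} [PseudoMetricSpace X] [MeasurableSpace X]
    {Y : Type*} [PseudoEMetricSpace Y] (μ : Measure X) (p : ℝ)
    (u : X → Y) (ρ : X → ℝ≥0∞) : Prop :=
  pathMod μ p {γ : UPath X | ¬ edist (u γ.start) (u γ.finish) ≤ γ.integral ρ} = 0

/-- `ρ` is a `p`-weak upper gradient of `u` in the subset `U`. -/
def IsWeakUpperGradientOn {X : Type*} [PseudoMetricSpace X] [MeasurableSpace X]
    {Y : Type*} [PseudoEMetricSpace Y] (μ : Measure X) (p : ℝ) (U : Set X)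
    (u : X → Y) (ρ : X → ℝ≥0∞) : Prop :=
  pathMod (μ.restrict U) p
    {γ : UPath X | γ.InSet U ∧ ¬ edist (u γ.start) (u γ.finish) ≤ γ.integral ρ} = 0

/-- `ρ` is the minimal `p`-weak upper gradient of `u`: it is a `p`-integrable `p`-weak
upper gradient which is `μ`-a.e. dominated by every other one. -/
def IsMinimalWeakUpperGradient {X : Type*} [PseudoMetricSpace X] [MeasurableSpace X]
    {Y : Type*} [PseudoEMetricSpace Y] (μ : Measure X) (p : ℝ)
    (u : X → Y) (ρ : X → ℝ≥0∞) : Prop :=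
  Measurable ρ ∧ IsWeakUpperGradient μ p u ρ ∧ (∫⁻ x, ρ x ^ p ∂μ) < ⊤ ∧
    ∀ ρ' : X → ℝ≥0∞, Measurable ρ' → IsWeakUpperGradient μ p u ρ' →
      (∫⁻ x, ρ' x ^ p ∂μ) < ⊤ → ∀ᵐ x ∂μ, ρ x ≤ ρ' x

/-! ### Doubling measures, Poincaré inequalities, Ahlfors regularity -/

/-- `μ` is a doubling (Borel) measure with doubling constant `Cμ`:
`0 < μ(2B) ≤ Cμ · μ(B) < ∞` for every ball `B` of radius `r < diam T`. -/
def IsDoubling {X : Type*} [MetricSpace X] [MeasurableSpace X]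
    (μ : Measure X) (Cμ : ℝ≥0∞) : Prop :=
  ∀ (x : X) (r : ℝ), 0 < r → r < Metric.diam (Set.univ : Set X) →
    0 < μ (ball x (2 * r)) ∧ μ (ball x (2 * r)) ≤ Cμ * μ (ball x r) ∧
      Cμ * μ (ball x r) < ⊤

/-- `(X, d, μ)` supports a weak `1`-Poincaré inequality with constants `CP`, `lP`:
`⨍_B |u - u_B| dμ ≤ CP · diam B · ⨍_{lP·B} ρ dμ` for every locally integrable `u`
and every upper gradient `ρ` of `u`, and balls have positive finite measure. -/
def SupportsPoincare {X : Type*} [MetricSpace X] [MeasurableSpace X]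
    (μ : Measure X) (CP lP : ℝ) : Prop :=
  (∀ (x : X) (r : ℝ), 0 < r → 0 < μ (ball x r) ∧ μ (ball x r) < ⊤) ∧
  ∀ (u : X → ℝ) (ρ : X → ℝ≥0∞), LocallyIntegrable u μ → Measurable ρ →
    IsUpperGradient u ρ → ∀ (x : X) (r : ℝ), 0 < r →
      (∫⁻ y in ball x r, ENNReal.ofReal |u y - ⨍ z in ball x r, u z ∂μ| ∂μ) /
          μ (ball x r) ≤
        ENNReal.ofReal (CP * Metric.diam (ball x r)) *
          ((∫⁻ y in ball x (lP * r), ρ y ∂μ) / μ (ball x (lP * r)))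

/-- `μ` is Ahlfors `q`-regular with constants `0 < aA ≤ AA`. -/
def IsAhlforsRegular {X : Type*} [MetricSpace X] [MeasurableSpace X]
    (μ : Measure X) (q aA AA : ℝ) : Prop :=
  0 < aA ∧ aA ≤ AA ∧
    ∀ (x : X) (r : ℝ), 0 < r → r < Metric.diam (Set.univ : Set X) →
      ENNReal.ofReal (aA * r ^ q) ≤ μ (ball x r) ∧
        μ (ball x r) ≤ ENNReal.ofReal (AA * r ^ q)

/-! ### The circle `ℝ/ℤ`, loops and degree -/

lemma intCast_coe_eq_zero (k : ℤ) : ((k : ℝ) : UnitAddCircle) = 0 :=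
  (AddCircle.coe_eq_zero_iff _).mpr ⟨k, by simp⟩

/-- The standard loop of degree `k` in `ℝ/ℤ` based at `y`: `t ↦ y + [k t]`. -/
def stdLoop (k : ℤ) (y : UnitAddCircle) : Path y y where
  toFun := fun t => y + (((k : ℝ) * (t : ℝ) : ℝ) : UnitAddCircle)
  continuous_toFun := by
    refine continuous_const.add ?_
    exact (AddCircle.continuous_mk' 1).comp (by continuity)
  source' := by simp
  target' := by
    have h1 : ((1 : unitInterval) : ℝ) = 1 := rfl
    have h : (((k : ℝ) * ((1 : unitInterval) : ℝ) : ℝ) : UnitAddCircle) = 0 := by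
      rw [h1, mul_one]; exact intCast_coe_eq_zero k
    simp [h]

/-- Concatenation of `n` copies of a loop. -/
def loopPow {X : Type*} [TopologicalSpace X] {x : X} (γ : Path x x) : ℕ → Path x x
  | 0 => Path.refl x
  | n + 1 => (loopPow γ n).trans γ

/-- A loop `γ` based at `x` has degree 1 (relative to the chosen generator `α₀` based
at `x₀`) if it is loop-homotopic to a conjugate `η * α₀ * η⁻¹` of `α₀`. -/
def IsDegreeOneLoop {T : Type*} [TopologicalSpace T] (x₀ : T) (α₀ : Path x₀ x₀)
    {x : T} (γ : Path x x) : Prop :=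
  ∃ η : Path x x₀, Path.Homotopic γ (η.trans (α₀.trans η.symm))

/-- A map `f : T → ℝ/ℤ` has degree `k`: it pushes every degree-1 loop based at `x`
to a loop which is loop-homotopic to `[f x] + k·β`, `β (t) = [t]`. -/
def HasDegree {T : Type*} [TopologicalSpace T] (x₀ : T) (α₀ : Path x₀ x₀)
    (f : T → UnitAddCircle) (k : ℤ) : Prop :=
  ∃ hf : Continuous f, ∀ (x : T) (γ : Path x x), IsDegreeOneLoop x₀ α₀ γ →
    Path.Homotopic (γ.map hf) (stdLoop k (f x))

/-- The class of `α₀` generates `π₁(T, x₀) ≅ ℤ`. -/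
def IsGenerator {T : Type*} [TopologicalSpace T] (x₀ : T) (α₀ : Path x₀ x₀) : Prop :=
  Function.Bijective fun k : ℤ =>
    (FundamentalGroup.fromPath (X := TopCat.of T) ⟦α₀⟧ : FundamentalGroup (TopCat.of T) x₀) ^ k

/-- `T` is semilocally simply connected. -/
def SemilocallySimplyConnected (T : Type*) [TopologicalSpace T] : Prop :=
  ∀ x : T, ∃ U ∈ 𝓝 x, ∀ γ : Path x x, (∀ t, γ t ∈ U) → Path.Homotopic γ (Path.refl x)

/-- `f` is a Lipschitz map of degree 1. -/
def DegOneLip {T : Type*} [MetricSpace T] (x₀ : T) (α₀ : Path x₀ x₀)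
    (f : T → UnitAddCircle) : Prop :=
  (∃ L : ℝ≥0, LipschitzWith L f) ∧ HasDegree x₀ α₀ f 1

/-! ### Capacity and surface modulus -/

/-- The degree 1 `p`-capacity of `T`, defined through minimal `p`-weak upper gradients:
the infimum of `∫ ρ^p dμ` over `p`-weak upper gradients `ρ` of Lipschitz degree-1 maps. -/
def cap {T : Type*} [MetricSpace T] [MeasurableSpace T] (μ : Measure T) (p : ℝ)
    (x₀ : T) (α₀ : Path x₀ x₀) : ℝ≥0∞ :=
  ⨅ (f : T → UnitAddCircle) (_ : DegOneLip x₀ α₀ f) (ρ : T → ℝ≥0∞)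
    (_ : Measurable ρ ∧ IsWeakUpperGradient μ p f ρ),
      ∫⁻ x, ρ x ^ p ∂μ

/-- The pointwise Lipschitz constant `Lip f (x)`. -/
def pLip {T : Type*} [MetricSpace T] (f : T → UnitAddCircle) (x : T) : ℝ≥0∞ :=
  Filter.limsup
    (fun r : ℝ => ⨆ y ∈ ball x r, edist (f x) (f y) / ENNReal.ofReal r) (𝓝[>] (0 : ℝ))

/-- The degree 1 `p`-capacity of `T`, defined through pointwise Lipschitz constants. -/
def capLip {T : Type*} [MetricSpace T] [MeasurableSpace T] (μ : Measure T) (p : ℝ)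
    (x₀ : T) (α₀ : Path x₀ x₀) : ℝ≥0∞ :=
  ⨅ (f : T → UnitAddCircle) (_ : DegOneLip x₀ α₀ f), ∫⁻ x, pLip f x ^ p ∂μ

/-- The codimension 1 spherical Hausdorff measure, as a set function:
`H(A) = sup_{δ>0} inf { ∑ μ(B_i)/r_i }`, the infimum being over countable covers of `A`
by balls `B_i` of radii `r_i ≤ δ`. -/
def codimH {T : Type*} [MetricSpace T] [MeasurableSpace T] (μ : Measure T)
    (A : Set T) : ℝ≥0∞ :=
  ⨆ (δ : ℝ) (_ : 0 < δ),
    ⨅ (c : ℕ → T) (r : ℕ → ℝ) (_ : ∀ i, r i ≤ δ)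
      (_ : A ⊆ ⋃ i, ball (c i) (r i)),
        ∑' i, μ (ball (c i) (r i)) / ENNReal.ofReal (r i)

/-- The integral `∫_S g dH` of `g ≥ 0` over `S` against the codimension 1 Hausdorff
measure, via the layer-cake (Choquet) formula. -/
def choquetIntegral {T : Type*} [MetricSpace T] [MeasurableSpace T] (μ : Measure T)
    (S : Set T) (g : T → ℝ≥0∞) : ℝ≥0∞ :=
  ∫⁻ t in Set.Ioi (0 : ℝ), codimH μ {x | x ∈ S ∧ ENNReal.ofReal t < g x}

/-- The family `Γ*` of all level sets `φ⁻¹[0]` of finite codimension 1 Hausdorff measure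
of continuous degree-1 maps `φ : T → ℝ/ℤ`. -/
def Surfaces {T : Type*} [MetricSpace T] [MeasurableSpace T] (μ : Measure T)
    (x₀ : T) (α₀ : Path x₀ x₀) : Set (Set T) :=
  {S | ∃ φ : T → UnitAddCircle, HasDegree x₀ α₀ φ 1 ∧ S = φ ⁻¹' {0} ∧ codimH μ S < ⊤}

/-- The surface `q`-modulus of a family of surfaces, the surfaces being equipped with the
codimension 1 Hausdorff measure. -/
def surfModOf {T : Type*} [MetricSpace T] [MeasurableSpace T] (μ : Measure T) (q : ℝ)
    (𝒮 : Set (Set T)) : ℝ≥0∞ :=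
  ⨅ (ρ : T → ℝ≥0∞) (_ : Measurable ρ ∧ ∀ S ∈ 𝒮, 1 ≤ choquetIntegral μ S ρ),
    ∫⁻ x, ρ x ^ q ∂μ

/-- The surface modulus `mod_q T`. -/
def surfMod {T : Type*} [MetricSpace T] [MeasurableSpace T] (μ : Measure T) (q : ℝ)
    (x₀ : T) (α₀ : Path x₀ x₀) : ℝ≥0∞ :=
  surfModOf μ q (Surfaces μ x₀ α₀)

/-- The family `Γ*` with the `(q-1)`-dimensional Hausdorff measure instead. -/
def SurfacesH {T : Type*} [MetricSpace T] [MeasurableSpace T] [BorelSpace T] (q : ℝ)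
    (x₀ : T) (α₀ : Path x₀ x₀) : Set (Set T) :=
  {S | ∃ φ : T → UnitAddCircle, HasDegree x₀ α₀ φ 1 ∧ S = φ ⁻¹' {0} ∧ μH[q - 1] S < ⊤}

/-- The surface modulus `mod_q T` defined through the `(q-1)`-dimensional Hausdorff
measures `H^{q-1} ⌞ S`, `S ∈ Γ*`. -/
def surfModH {T : Type*} [MetricSpace T] [MeasurableSpace T] [BorelSpace T]
    (μ : Measure T) (q pstar : ℝ) (x₀ : T) (α₀ : Path x₀ x₀) : ℝ≥0∞ :=
  ⨅ (ρ : T → ℝ≥0∞)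
    (_ : Measurable ρ ∧ ∀ S ∈ SurfacesH (T := T) q x₀ α₀, 1 ≤ ∫⁻ x in S, ρ x ∂μH[q - 1]),
      ∫⁻ x, ρ x ^ pstar ∂μ

/-- The standing assumptions 2.1. -/
def Standing {T : Type*} [MetricSpace T] [MeasurableSpace T] (μ : Measure T)
    (Cμ : ℝ≥0∞) (CP lP : ℝ) (x₀ : T) (α₀ : Path x₀ x₀) : Prop :=
  IsDoubling μ Cμ ∧ SupportsPoincare μ CP lP ∧ SemilocallySimplyConnected T ∧
    IsGenerator x₀ α₀ ∧ ∃ f : T → UnitAddCircle, DegOneLip x₀ α₀ f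

/-! ### The universal cover -/

/-- `π` is a local isometry. -/
def IsLocalIsometry {X Y : Type*} [MetricSpace X] [MetricSpace Y] (π : X → Y) : Prop :=
  ∀ x : X, ∃ ε : ℝ, 0 < ε ∧
    ∀ y ∈ ball x ε, ∀ z ∈ ball x ε, dist (π y) (π z) = dist y z

/-- `(T̃, π)` is the universal cover of `T`, with `T̃` carrying the length metric pulled
back by `π` (so that `π` is a local isometry). -/
def CoverSetup {T Tt : Type*} [MetricSpace T] [MetricSpace Tt] (π : Tt → T) : Prop :=
  IsCoveringMap π ∧ Function.Surjective π ∧ IsLocalIsometry π ∧ SimplyConnectedSpace Tt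

/-- `τ` is the deck transformation of the cover `π` determined by
`τ (γ̃ 0) = γ̃ 1` for every lift `γ̃` of every degree-1 loop `γ`. -/
def IsDeck {T Tt : Type*} [MetricSpace T] [MetricSpace Tt] (π : Tt → T)
    (x₀ : T) (α₀ : Path x₀ x₀) (τ : Tt → Tt) : Prop :=
  Continuous τ ∧ (∀ x, π (τ x) = π x) ∧
    ∀ (x : T) (γ : Path x x), IsDegreeOneLoop x₀ α₀ γ →
      ∀ γt : C(unitInterval, Tt), (∀ t, π (γt t) = γ t) → τ (γt 0) = γt 1

/-- `μ̃` is the natural lift of `μ` to the cover: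
`μ̃ (A) = ∫ #(π⁻¹(x) ∩ A) dμ (x)`. -/
def IsLiftedMeasure {T Tt : Type*} [MetricSpace T] [MeasurableSpace T]
    [MetricSpace Tt] [MeasurableSpace Tt] (π : Tt → T) (μ : Measure T)
    (μt : Measure Tt) : Prop :=
  ∀ A : Set Tt, MeasurableSet A → μt A = ∫⁻ x, ((π ⁻¹' {x} ∩ A).encard : ℝ≥0∞) ∂μ

/-! ### Newtonian spaces -/

/-- The seminorm of `N^{1,p}(U)`. -/
def NSeminorm {X : Type*} [PseudoMetricSpace X] [MeasurableSpace X] (μ : Measure X)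
    (p : ℝ) (U : Set X) (f : X → ℝ) : ℝ≥0∞ :=
  (∫⁻ x in U, ENNReal.ofReal |f x| ^ p ∂μ) ^ (1 / p) +
    ⨅ (ρ : X → ℝ≥0∞) (_ : Measurable ρ ∧ IsWeakUpperGradientOn μ p U f ρ),
      (∫⁻ x in U, ρ x ^ p ∂μ) ^ (1 / p)

/-- `f ∈ N^{1,p}_loc`. -/
def MemNloc {X : Type*} [PseudoMetricSpace X] [MeasurableSpace X] (μ : Measure X)
    (p : ℝ) (f : X → ℝ) : Prop :=
  ∀ U : Set X, IsOpen U → IsCompact (closure U) →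
    (∫⁻ x in U, ENNReal.ofReal |f x| ^ p ∂μ) < ⊤ ∧
      ∃ ρ : X → ℝ≥0∞, Measurable ρ ∧ IsWeakUpperGradientOn μ p U f ρ ∧
        (∫⁻ x in U, ρ x ^ p ∂μ) < ⊤

/-- The collection `F`: nonnegative Borel functions `ρ` on `T` such that `ρ ∘ π` is a
`p`-weak upper gradient of some `f ∈ N^{1,p}_loc (T̃)` with `f ∘ τ - f = 1` a.e. -/
def MemF {T Tt : Type*} [MetricSpace T] [MeasurableSpace T] [MetricSpace Tt]
    [MeasurableSpace Tt] (π : Tt → T) (τ : Tt → Tt) (μt : Measure Tt) (p : ℝ)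
    (ρ : T → ℝ≥0∞) : Prop :=
  Measurable ρ ∧ ∃ f : Tt → ℝ, MemNloc μt p f ∧ (∀ᵐ x ∂μt, f (τ x) - f x = 1) ∧
    IsWeakUpperGradient μt p f (ρ ∘ π)

/-- The capacity `cap_p^F T`. -/
def capF {T Tt : Type*} [MetricSpace T] [MeasurableSpace T] [MetricSpace Tt]
    [MeasurableSpace Tt] (μ : Measure T) (π : Tt → T) (τ : Tt → Tt) (μt : Measure Tt)
    (p : ℝ) : ℝ≥0∞ :=
  ⨅ (ρ : T → ℝ≥0∞) (_ : MemF π τ μt p ρ), ∫⁻ x, ρ x ^ p ∂μ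

/-! ### Miscellaneous operators -/

/-- The restricted Hardy–Littlewood maximal operator `M_R`. -/
def restrMax {T : Type*} [MetricSpace T] [MeasurableSpace T] (μ : Measure T)
    (R : ℝ≥0∞) (g : T → ℝ≥0∞) (x : T) : ℝ≥0∞ :=
  ⨆ (s : ℝ) (_ : 0 < s ∧ ENNReal.ofReal s ≤ R),
    (∫⁻ y in ball x s, g y ∂μ) / μ (ball x s)

/-- The upper Lebesgue integral. -/
def upperLintegral {Y : Type*} [MeasurableSpace Y] (ν : Measure Y)
    (F : Y → ℝ≥0∞) : ℝ≥0∞ :=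
  ⨅ (G : Y → ℝ≥0∞) (_ : Measurable G ∧ ∀ y, F y ≤ G y), ∫⁻ y, G y ∂ν

/-! ### The sets `Ω` and the functions `ψ̃`, `ζ`, `ψ` of Section 4.3 -/

/-- The set of points reachable from `A` by a rectifiable path inside `W`. -/
def reach {T : Type*} [MetricSpace T] (A W : Set T) : Set T :=
  {x | ∃ γ : UPath T, γ.start ∈ A ∧ γ.finish = x ∧ γ.InSet W}

/-- `inf_γ ∫_γ ρ ds` over rectifiable paths connecting `A` to `x` inside `W`. -/
def pathDist {T : Type*} [MetricSpace T] (ρ : T → ℝ≥0∞) (A W : Set T) (x : T) : ℝ≥0∞ :=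
  ⨅ (γ : UPath T) (_ : γ.start ∈ A ∧ γ.finish = x ∧ γ.InSet W), γ.integral ρ

open scoped Classical in
/-- The function `ψ̃`. -/
def psiTilde {T : Type*} [MetricSpace T] (ρ : T → ℝ≥0∞) (A W : Set T) (x : T) : ℝ :=
  if x ∈ reach A W then (pathDist ρ A W x).toReal else 0

/-- The function `min {1, ψ̃}`. -/
def zeta {T : Type*} [MetricSpace T] (ρ : T → ℝ≥0∞) (A W : Set T) (x : T) : ℝ :=
  min 1 (psiTilde ρ A W x)

/-- The competing admissible map `ψ = [min {1, ψ̃}] : T → ℝ/ℤ`. -/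
def psiMap {T : Type*} [MetricSpace T] (ρ : T → ℝ≥0∞) (A W : Set T) (x : T) :
    UnitAddCircle :=
  ((zeta ρ A W x : ℝ) : UnitAddCircle)

end Duality

namespace Duality

section

/-- A transitive relation between the points of `[a, b]` which holds locally holds globally. -/
lemma rel_of_locally {P : ℝ → ℝ → Prop} {a b : ℝ} (hab : a ≤ b)
    (htrans : ∀ r s t, a ≤ r → r ≤ s → s ≤ t → t ≤ b → P r s → P s t → P r t)
    (hloc : ∀ t ∈ Icc a b, ∃ δ > 0, ∀ r ∈ Icc a b, ∀ s ∈ Icc a b,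
      t - δ < r → r ≤ s → s < t + δ → P r s) : P a b := by
  choose! δ hδ hP using hloc
  obtain ⟨t, h0, hmono, ⟨m, hm⟩, ht⟩ := exists_monotone_Icc_subset_open_cover_Icc hab
    (c := fun i : Icc a b => {x : Icc a b | (i : ℝ) - δ i < x ∧ (x : ℝ) < i + δ i})
    (fun i => (isOpen_lt continuous_const continuous_subtype_val).inter
      (isOpen_lt continuous_subtype_val continuous_const))
    (fun x _ => mem_iUnion.2 ⟨x, by
      have := hδ x x.2
      exact ⟨by linarith, by linarith⟩⟩)
  have key : ∀ n, P a (t n) := by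
    intro n
    induction n with
    | zero =>
      rw [h0]
      have := hδ a ⟨le_rfl, hab⟩
      exact hP a ⟨le_rfl, hab⟩ a ⟨le_rfl, hab⟩ a ⟨le_rfl, hab⟩ (by linarith) le_rfl (by linarith)
    | succ n ih =>
      obtain ⟨i, hi⟩ := ht n
      have h1 := hi ⟨le_rfl, hmono n.le_succ⟩
      have h2 := hi ⟨hmono n.le_succ, le_rfl⟩
      have hle : (t n : ℝ) ≤ t (n + 1) := hmono n.le_succ
      exact htrans a (t n) (t (n + 1)) le_rfl (t n).2.1 hle (t (n + 1)).2.2 ih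
        (hP i i.2 _ (t n).2 _ (t (n + 1)).2 h1.1 hle h2.2)
  have := key m
  rwa [hm m le_rfl] at this

lemma lipschitzOnWith_Icc_of_locally {X : Type*} [PseudoMetricSpace X] {h : ℝ → X} {K : ℝ≥0}
    {a b : ℝ} (hloc : ∀ t ∈ Icc a b, ∃ δ > 0, ∀ r ∈ Icc a b, ∀ s ∈ Icc a b,
      t - δ < r → r ≤ s → s < t + δ → dist (h r) (h s) ≤ K * (s - r)) :
    LipschitzOnWith K h (Icc a b) := by
  have key : ∀ r ∈ Icc a b, ∀ s ∈ Icc a b, r ≤ s → dist (h r) (h s) ≤ K * (s - r) := by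
    intro r hr s hs hrs
    refine rel_of_locally (P := fun r s => dist (h r) (h s) ≤ K * (s - r)) hrs ?_ ?_
    · intro x y z _ _ _ _ h1 h2
      linarith [dist_triangle (h x) (h y) (h z)]
    · intro t ht
      obtain ⟨δ, hδ, H⟩ := hloc t ⟨hr.1.trans ht.1, ht.2.trans hs.2⟩
      exact ⟨δ, hδ, fun x hx y hy => H x ⟨hr.1.trans hx.1, hx.2.trans hs.2⟩ y
        ⟨hr.1.trans hy.1, hy.2.trans hs.2⟩⟩
  refine LipschitzOnWith.of_dist_le_mul fun r hr s hs => ?_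
  rcases le_total r s with h1 | h1
  · rw [Real.dist_eq, abs_sub_comm, abs_of_nonneg (sub_nonneg.2 h1)]
    exact key r hr s hs h1
  · rw [Real.dist_eq, abs_of_nonneg (sub_nonneg.2 h1), dist_comm]
    exact key s hs r hr h1

/-- If a Lipschitz function `h` agrees on `E` with a function `H` whose increments are controlled
by the integral of `r`, then the increments of `h` are controlled by the integral of the function
equal to `r` on `E` and to the Lipschitz constant elsewhere. -/
lemma ofReal_abs_sub_le_lintegral_of_eqOn {h H : ℝ → ℝ} {K : ℝ≥0} {a b : ℝ} (hab : a ≤ b)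
    (hh : LipschitzOnWith K h (Icc a b)) {r : ℝ → ℝ≥0∞}
    (hr : AEMeasurable r (volume.restrict (Icc a b)))
    (hfin : ∫⁻ t in Icc a b, r t ≠ ⊤)
    (hH : ∀ s t, a ≤ s → s ≤ t → t ≤ b →
      ENNReal.ofReal |H t - H s| ≤ ∫⁻ x in Icc s t, r x)
    {E : Set ℝ} (hE : ∀ t ∈ E ∩ Icc a b, h t = H t) {θ : ℝ → ℝ≥0∞}
    (hθr : ∀ t ∈ E ∩ Icc a b, r t ≤ θ t) (hθK : ∀ t ∈ Icc a b, t ∉ E → K ≤ θ t) :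
    ENNReal.ofReal |h b - h a| ≤ ∫⁻ t in Icc a b, θ t := by
  have hac : AbsolutelyContinuousOnInterval h a b :=
    LipschitzOnWith.absolutelyContinuousOnInterval (by rwa [uIcc_of_le hab])
  have hint : IntegrableOn (fun t => (r t).toReal) (Icc a b) :=
    integrable_toReal_of_lintegral_ne_top hr hfin
  have hintI : ∀ s t, a ≤ s → s ≤ t → t ≤ b →
      IntervalIntegrable (fun t => (r t).toReal) volume s t := fun s t h1 h2 h3 =>
    (intervalIntegrable_iff_integrableOn_Icc_of_le h2).2
      (hint.mono_set (Icc_subset_Icc h1 h3))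
  have hrfin : ∀ᵐ t, t ∈ Icc a b → r t ≠ ⊤ := by
    have := ae_lt_top' hr hfin
    rw [ae_restrict_iff' measurableSet_Icc] at this
    filter_upwards [this] with t ht htI using (ht htI).ne
  set R : ℝ → ℝ := fun x => ∫ t in a..x, (r t).toReal with hR
  have hRsub : ∀ s t, a ≤ s → s ≤ t → t ≤ b → |H t - H s| ≤ R t - R s := by
    intro s t h1 h2 h3
    have e1 : R t - R s = ∫ x in s..t, (r x).toReal := by
      rw [hR]
      exact intervalIntegral.integral_interval_sub_left (hintI a t le_rfl (h1.trans h2) h3)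
        (hintI a s le_rfl h1 (h2.trans h3))
    have hsub : Icc s t ⊆ Icc a b := Icc_subset_Icc h1 h3
    rw [e1, intervalIntegral.integral_of_le h2, ← integral_Icc_eq_integral_Ioc,
      integral_toReal (hr.mono_measure (Measure.restrict_mono hsub le_rfl))]
    · have hne : ∫⁻ x in Icc s t, r x ≠ ⊤ :=
        ((lintegral_mono_set hsub).trans_lt hfin.lt_top).ne
      have := ENNReal.toReal_mono hne (hH s t h1 h2 h3)
      rwa [ENNReal.toReal_ofReal (abs_nonneg _)] at this
    · rw [ae_restrict_iff' measurableSet_Icc]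
      filter_upwards [hrfin] with x hx hxI using (hx (hsub hxI)).lt_top
  have hiso : ∀ᵐ t : ℝ, ¬ (t ∈ E ∩ Icc a b ∧ 𝓝[(E ∩ Icc a b) ∩ Ioi t] t = ⊥) := by
    have hc := countable_setOfPred_isolated_right_within (s := E ∩ Icc a b)
    have := hc.measure_zero (volume : Measure ℝ)
    exact measure_eq_zero_iff_ae_notMem.1 this
  have hends : ∀ᵐ t : ℝ, t ≠ a ∧ t ≠ b := by
    have h1 : ∀ᵐ x : ℝ, x ≠ a := by simp [ae_iff, measure_singleton]
    have h2 : ∀ᵐ x : ℝ, x ≠ b := by simp [ae_iff, measure_singleton]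
    filter_upwards [h1, h2] with x hx hy using ⟨hx, hy⟩
  have hderiv : ∀ᵐ t, t ∈ Icc a b → ‖deriv h t‖ₑ ≤ θ t := by
    filter_upwards [hac.ae_differentiableAt, (hintI a b le_rfl hab le_rfl).ae_hasDerivAt_integral,
      hrfin, hiso, hends] with t hd hRd hrt hti hte htI
    rw [uIcc_of_le hab] at hd hRd
    have hd := hd htI
    have hRd : HasDerivAt R (r t).toReal t := hRd htI a ⟨le_rfl, hab⟩
    by_cases htE : t ∈ E
    · refine le_trans ?_ (hθr t ⟨htE, htI⟩)
      have hne : (𝓝[(E ∩ Icc a b) ∩ Ioi t] t).NeBot :=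
        ⟨fun hbot => hti ⟨⟨htE, htI⟩, hbot⟩⟩
      have hle : 𝓝[(E ∩ Icc a b) ∩ Ioi t] t ≤ 𝓝[≠] t :=
        nhdsWithin_mono _ fun s hs => (ne_of_gt hs.2 : s ≠ t)
      have h1 := ((hasDerivAt_iff_tendsto_slope.1 hd.hasDerivAt).mono_left hle).abs
      have h2 := (hasDerivAt_iff_tendsto_slope.1 hRd).mono_left hle
      have h3 : |deriv h t| ≤ (r t).toReal := by
        refine le_of_tendsto_of_tendsto h1 h2 ?_
        filter_upwards [self_mem_nhdsWithin] with s hs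
        have hst : t < s := hs.2
        have h4 := hRsub t s htI.1 hst.le hs.1.2.2
        rw [← hE s hs.1, ← hE t ⟨htE, htI⟩] at h4
        rw [slope_def_field, slope_def_field, abs_div, abs_of_pos (sub_pos.2 hst)]
        gcongr
      rw [← ENNReal.ofReal_toReal (hrt htI), ← ofReal_norm]
      exact ENNReal.ofReal_le_ofReal h3
    · refine le_trans ?_ (hθK t htI htE)
      have hnhds : Icc a b ∈ 𝓝 t :=
        Icc_mem_nhds (lt_of_le_of_ne htI.1 hte.1.symm) (lt_of_le_of_ne htI.2 hte.2)
      have := norm_deriv_le_of_lipschitzOn hnhds hh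
      rw [← ofReal_norm, ← ENNReal.ofReal_coe_nnreal]
      exact ENNReal.ofReal_le_ofReal this
  rw [← hac.integral_deriv_eq_sub, intervalIntegral.integral_of_le hab,
    ← integral_Icc_eq_integral_Ioc, ← Real.norm_eq_abs, ofReal_norm]
  refine (enorm_integral_le_lintegral_enorm _).trans (lintegral_mono_ae ?_)
  rw [ae_restrict_iff' measurableSet_Icc]
  exact hderiv

end

section

section MetricMeasure

variable {T : Type*} [MetricSpace T] [MeasurableSpace T] {μ : Measure T}

lemma exists_doubling_constant [CompactSpace T] {Cμ : ℝ≥0∞} (h : IsDoubling μ Cμ) (x₀ : T) :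
    ∃ C : ℝ≥0, ∀ (x : T) (r : ℝ), 0 < r → μ (ball x (2 * r)) ≤ C * μ (ball x r) := by
  set D := diam (univ : Set T) with hD
  have huniv : ∀ (x : T) (r : ℝ), D < r → ball x r = univ := fun x r hr =>
    eq_univ_of_forall fun y =>
      (dist_le_diam_of_mem isCompact_univ.isBounded (mem_univ y) (mem_univ x)).trans_lt hr
  have hC : 0 < D → Cμ ≠ ⊤ := by
    rintro hD0 rfl
    obtain ⟨h1, -, h3⟩ := h x₀ (D / 2) (by linarith) (by linarith)
    have h4 : μ (ball x₀ (D / 2)) ≠ 0 := by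
      intro h0
      have := (h x₀ (D / 2) (by linarith) (by linarith)).2.1
      rw [h0, mul_zero] at this
      exact absurd this (not_le.2 h1)
    rw [ENNReal.top_mul h4] at h3
    exact lt_irrefl _ h3
  refine ⟨max Cμ.toNNReal 1, fun x r hr => ?_⟩
  have one_le : ∀ m : ℝ≥0∞, m ≤ (max Cμ.toNNReal 1 : ℝ≥0) * m := fun m => by
    conv_lhs => rw [← one_mul m]
    gcongr
    exact_mod_cast le_max_right _ _
  have C_le : 0 < D → ∀ m : ℝ≥0∞, Cμ * m ≤ (max Cμ.toNNReal 1 : ℝ≥0) * m := fun h0 m => by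
    gcongr
    rw [← ENNReal.coe_toNNReal (hC h0)]
    exact_mod_cast le_max_left _ _
  rcases lt_trichotomy r D with h1 | h1 | h1
  · exact (h x r hr h1).2.1.trans (C_le (hr.trans h1) _)
  · have h2 := (h x (3 / 4 * r) (by linarith) (by linarith)).2.1
    rw [huniv x _ (by linarith)] at h2 ⊢
    refine (h2.trans ?_).trans (C_le (h1 ▸ hr) _)
    gcongr
    linarith
  · rw [huniv x _ h1, huniv x _ (by linarith)]
    exact one_le _

/-- The set of points at which some average of `g` over a ball exceeds `lam`. -/
def badSet (μ : Measure T) (g : T → ℝ≥0∞) (lam : ℝ≥0∞) : Set T :=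
  {x | ∃ r : ℝ, 0 < r ∧ lam * μ (ball x r) < ∫⁻ y in ball x r, g y ∂μ}

lemma setLIntegral_le_of_notMem_badSet {g : T → ℝ≥0∞} {lam : ℝ≥0∞} {x : T}
    (hx : x ∉ badSet μ g lam) {r : ℝ} (hr : 0 < r) :
    ∫⁻ y in ball x r, g y ∂μ ≤ lam * μ (ball x r) := by
  by_contra h
  exact hx ⟨r, hr, not_le.1 h⟩

/-- The weak-type estimate for the maximal function. -/
lemma mul_measure_badSet_le [CompactSpace T] [BorelSpace T] {C : ℝ≥0}
    (hC : ∀ (x : T) (r : ℝ), 0 < r → μ (ball x (2 * r)) ≤ C * μ (ball x r))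
    (g : T → ℝ≥0∞) (lam : ℝ≥0∞) :
    lam * μ (badSet μ g lam) ≤ (C : ℝ≥0∞) ^ 2 * ∫⁻ y, g y ∂μ := by
  set D := diam (univ : Set T) with hD
  have huniv : ∀ (x : T) (r : ℝ), D < r → ball x r = univ := fun x r hr =>
    eq_univ_of_forall fun y =>
      (dist_le_diam_of_mem isCompact_univ.isBounded (mem_univ y) (mem_univ x)).trans_lt hr
  have hex : ∀ x ∈ badSet μ g lam, ∃ r : ℝ, 0 < r ∧ r ≤ D + 1 ∧
      lam * μ (ball x r) < ∫⁻ y in ball x r, g y ∂μ := by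
    rintro x ⟨r, hr, hx⟩
    rcases le_or_gt r (D + 1) with h1 | h1
    · exact ⟨r, hr, h1, hx⟩
    · refine ⟨D + 1, by have := diam_nonneg (s := (univ : Set T)); linarith, le_rfl, ?_⟩
      rw [huniv x r (by linarith)] at hx
      rwa [huniv x _ (by linarith)]
  choose! r hr hrD hlt using hex
  obtain ⟨u, hut, hdisj, hcov⟩ := Vitali.exists_disjoint_subfamily_covering_enlargement_ball
    (badSet μ g lam) id r (D + 1) hrD 4 (by norm_num)
  have hcount : u.Countable := by
    refine hdisj.countable_of_isOpen (fun _ _ => isOpen_ball) fun a ha => ?_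
    exact ⟨a, mem_ball_self (hr a (hut ha))⟩
  have hsub : badSet μ g lam ⊆ ⋃ b ∈ u, ball b (4 * r b) := fun x hx => by
    obtain ⟨b, hb, hbx⟩ := hcov x hx
    exact mem_biUnion hb (hbx (mem_ball_self (hr x hx)))
  have h4 : ∀ b ∈ u, μ (ball b (4 * r b)) ≤ (C : ℝ≥0∞) ^ 2 * μ (ball b (r b)) := by
    intro b hb
    have hrb := hr b (hut hb)
    calc μ (ball b (4 * r b)) = μ (ball b (2 * (2 * r b))) := by ring_nf
      _ ≤ C * μ (ball b (2 * r b)) := hC _ _ (by linarith)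
      _ ≤ C * (C * μ (ball b (r b))) := by gcongr; exact hC _ _ hrb
      _ = _ := by rw [pow_two, mul_assoc]
  calc lam * μ (badSet μ g lam) ≤ lam * ∑' b : u, μ (ball b.1 (4 * r b)) := by
        gcongr
        exact (measure_mono hsub).trans (measure_biUnion_le _ hcount _)
    _ ≤ lam * ∑' b : u, (C : ℝ≥0∞) ^ 2 * μ (ball b.1 (r b)) := by
        gcongr with b
        exact h4 b b.2
    _ = (C : ℝ≥0∞) ^ 2 * ∑' b : u, lam * μ (ball b.1 (r b)) := by
        rw [ENNReal.tsum_mul_left, ENNReal.tsum_mul_left]; ring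
    _ ≤ (C : ℝ≥0∞) ^ 2 * ∑' b : u, ∫⁻ y in ball b.1 (r b), g y ∂μ := by
        gcongr with b
        exact (hlt b (hut b.2)).le
    _ = (C : ℝ≥0∞) ^ 2 * ∫⁻ y in ⋃ b ∈ u, ball b (r b), g y ∂μ := by
        have hdisj' : u.PairwiseDisjoint fun b => ball b (r b) := hdisj
        rw [lintegral_biUnion hcount (fun _ _ => measurableSet_ball) hdisj']
    _ ≤ _ := by
        gcongr
        exact Measure.restrict_le_self

lemma tendsto_rpow_mul_measure_badSet [CompactSpace T] [BorelSpace T] {C : ℝ≥0}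
    (hC : ∀ (x : T) (r : ℝ), 0 < r → μ (ball x (2 * r)) ≤ C * μ (ball x r))
    [IsFiniteMeasure μ] {g : T → ℝ≥0∞} (hg : Measurable g) {p : ℝ} (hp : 1 < p)
    (hfin : ∫⁻ x, g x ^ p ∂μ ≠ ⊤) :
    Tendsto (fun n : ℕ => (n : ℝ≥0∞) ^ p * μ (badSet μ g n)) atTop (𝓝 0) := by
  have hp0 : 0 < p := by linarith
  -- the part of `g` above `n / 2`
  set A : ℕ → Set T := fun n => {x | (n : ℝ≥0∞) / 2 < g x} with hA
  have hAm : ∀ n, MeasurableSet (A n) := fun n => measurableSet_lt measurable_const hg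
  have htail : Tendsto (fun n => ∫⁻ x in A n, g x ^ p ∂μ) atTop (𝓝 0) := by
    have h1 : Tendsto (fun n => ∫⁻ x, (A n).indicator (fun x => g x ^ p) x ∂μ) atTop
        (𝓝 (∫⁻ _, 0 ∂μ)) := by
      refine tendsto_lintegral_of_dominated_convergence (fun x => g x ^ p)
        (fun n => (hg.pow_const p).indicator (hAm n))
        (fun n => ae_of_all _ fun x => indicator_le_self _ _ x) hfin ?_
      filter_upwards [ae_lt_top (hg.pow_const p) hfin] with x hx
      have hx' : g x ≠ ⊤ := by
        intro h; rw [h, ENNReal.top_rpow_of_pos hp0] at hx; exact lt_irrefl _ hx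
      obtain ⟨N, hN⟩ := ENNReal.exists_nat_gt (ENNReal.mul_ne_top hx' ENNReal.ofNat_ne_top : g x * 2 ≠ ⊤)
      refine tendsto_const_nhds.congr' ?_
      filter_upwards [eventually_ge_atTop N] with n hn
      symm
      refine indicator_of_notMem ?_ _
      simp only [hA, mem_ofPred_eq, not_lt]
      rw [ENNReal.le_div_iff_mul_le (by simp) (by simp)]
      exact hN.le.trans (by exact_mod_cast hn)
    simp only [lintegral_zero] at h1
    refine h1.congr fun n => lintegral_indicator (hAm n) _
  have hkey : ∀ n : ℕ, 1 ≤ n → (n : ℝ≥0∞) ^ p * μ (badSet μ g n) ≤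
      (2 ^ p * (C : ℝ≥0∞) ^ 2) * ∫⁻ x in A n, g x ^ p ∂μ := by
    intro n hn
    set m : ℝ≥0∞ := (n : ℝ≥0∞) / 2 with hm
    have hm0 : m ≠ 0 := by
      rw [hm]; exact (ENNReal.div_pos (by exact_mod_cast (by omega : n ≠ 0)) (by simp)).ne'
    have hmt : m ≠ ⊤ := ENNReal.div_ne_top (by simp) (by simp)
    have hn2 : (n : ℝ≥0∞) = 2 * m := by
      rw [hm, ENNReal.mul_div_cancel (by simp) (by simp)]
    have hsub : badSet μ g n ⊆ badSet μ ((A n).indicator g) m := by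
      rintro x ⟨r, hr, hx⟩
      refine ⟨r, hr, ?_⟩
      have h1 : ∫⁻ y in ball x r, g y ∂μ ≤
          ∫⁻ y in ball x r, (A n).indicator g y ∂μ + m * μ (ball x r) := by
        rw [← setLIntegral_const, ← lintegral_add_right _ measurable_const]
        refine lintegral_mono fun y => ?_
        by_cases hy : y ∈ A n
        · rw [indicator_of_mem hy]; exact le_self_add
        · rw [indicator_of_notMem hy, zero_add]; exact not_lt.1 hy
      have h2 := hx.trans_le h1
      rw [hn2, two_mul, add_mul] at h2
      exact lt_of_add_lt_add_right h2
    have h1 : m * μ (badSet μ g n) ≤ (C : ℝ≥0∞) ^ 2 * ∫⁻ x in A n, g x ∂μ := by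
      rw [← lintegral_indicator (hAm n)]
      refine le_trans ?_ (mul_measure_badSet_le hC _ m)
      gcongr
    have h2 : m ^ (p - 1) * ∫⁻ x in A n, g x ∂μ ≤ ∫⁻ x in A n, g x ^ p ∂μ := by
      rw [← lintegral_const_mul _ hg]
      refine setLIntegral_mono (hg.pow_const p) fun x hx => ?_
      rcases eq_or_ne (g x) ⊤ with h3 | h3
      · rw [h3, ENNReal.top_rpow_of_pos hp0]; exact le_top
      have h4 : g x ^ p = g x ^ (p - 1) * g x := by
        have : g x ≠ 0 := ((zero_le).trans_lt hx).ne'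
        conv_rhs => rw [← ENNReal.rpow_one (g x), ← ENNReal.rpow_mul, one_mul]
        rw [← ENNReal.rpow_add _ _ this h3]; ring_nf
      rw [h4]
      gcongr
      exact hx.le
    have h5 : m ^ p = m ^ (p - 1) * m := by
      conv_rhs => rw [← ENNReal.rpow_one m, ← ENNReal.rpow_mul, one_mul]
      rw [← ENNReal.rpow_add _ _ hm0 hmt]; ring_nf
    calc (n : ℝ≥0∞) ^ p * μ (badSet μ g n)
        = 2 ^ p * (m ^ (p - 1) * (m * μ (badSet μ g n))) := by
          rw [hn2, ENNReal.mul_rpow_of_nonneg _ _ hp0.le, h5, ← hn2]; ring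
      _ ≤ 2 ^ p * (m ^ (p - 1) * ((C : ℝ≥0∞) ^ 2 * ∫⁻ x in A n, g x ∂μ)) := by gcongr
      _ = 2 ^ p * (C : ℝ≥0∞) ^ 2 * (m ^ (p - 1) * ∫⁻ x in A n, g x ∂μ) := by ring
      _ ≤ _ := by gcongr
  have hlim := ENNReal.Tendsto.const_mul htail
    (a := 2 ^ p * (C : ℝ≥0∞) ^ 2) (Or.inr (ENNReal.mul_ne_top
      (ENNReal.rpow_ne_top_of_nonneg hp0.le (by simp)) (by simp)))
  rw [mul_zero] at hlim
  refine tendsto_of_tendsto_of_tendsto_of_le_of_le' tendsto_const_nhds hlim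
    (Eventually.of_forall fun _ => zero_le) ?_
  filter_upwards [eventually_ge_atTop 1] with n hn using hkey n hn

end MetricMeasure

end

section

section Telescoping

variable {T : Type*} [MetricSpace T] [MeasurableSpace T] {μ : Measure T}

lemma abs_setAverage_sub_mul_le {u : T → ℝ} {B : Set T} (hB0 : μ B ≠ 0) (hBt : μ B ≠ ⊤)
    (hu : IntegrableOn u B μ) (c : ℝ) :
    ENNReal.ofReal |(⨍ z in B, u z ∂μ) - c| * μ B ≤ ∫⁻ z in B, ENNReal.ofReal |u z - c| ∂μ := by
  have hpos : 0 < μ.real B := ENNReal.toReal_pos hB0 hBt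
  have hc : IntegrableOn (fun _ => c) B μ := integrableOn_const hBt
  have h1 : (⨍ z in B, u z ∂μ) - c = (μ.real B)⁻¹ * ∫ z in B, (u z - c) ∂μ := by
    rw [integral_sub hu hc, setIntegral_const, setAverage_eq, smul_eq_mul, smul_eq_mul]
    field_simp
  have h2 : |(⨍ z in B, u z ∂μ) - c| * μ.real B ≤ ∫ z in B, |u z - c| ∂μ := by
    rw [h1, abs_mul, abs_of_pos (inv_pos.2 hpos), mul_comm, ← mul_assoc, mul_inv_cancel₀ hpos.ne',
      one_mul]
    exact abs_integral_le_integral_abs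
  have h3 : Integrable (fun z => |u z - c|) (μ.restrict B) := (hu.sub hc).abs
  rw [← ofReal_integral_eq_lintegral_ofReal h3 (ae_of_all _ fun _ => abs_nonneg _)]
  refine le_trans (le_of_eq ?_) (ENNReal.ofReal_le_ofReal h2)
  rw [ENNReal.ofReal_mul (abs_nonneg _), measureReal_def, ENNReal.ofReal_toReal hBt]

lemma dist_setAverage_le {u : T → ℝ} {B' B : Set T} {M : ℝ≥0} {E : ℝ} (hE : 0 ≤ E)
    (hsub : B' ⊆ B) (hB0 : μ B' ≠ 0) (hBt : μ B ≠ ⊤) (hM : μ B ≤ M * μ B')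
    (hu : IntegrableOn u B μ)
    (hP : ∫⁻ z in B, ENNReal.ofReal |u z - ⨍ w in B, u w ∂μ| ∂μ ≤ ENNReal.ofReal E * μ B) :
    dist (⨍ z in B, u z ∂μ) (⨍ z in B', u z ∂μ) ≤ M * E := by
  have hBt' : μ B' ≠ ⊤ := ((measure_mono hsub).trans_lt hBt.lt_top).ne
  have h1 := abs_setAverage_sub_mul_le hB0 hBt' (hu.mono_set hsub) (⨍ w in B, u w ∂μ)
  have h2 : ENNReal.ofReal |(⨍ z in B', u z ∂μ) - ⨍ w in B, u w ∂μ| * μ B' ≤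
      ENNReal.ofReal (M * E) * μ B' := by
    refine (h1.trans (lintegral_mono_set hsub)).trans (hP.trans ?_)
    rw [ENNReal.ofReal_mul (p := (M : ℝ)) M.2, ENNReal.ofReal_coe_nnreal, mul_comm (M : ℝ≥0∞), mul_assoc]
    gcongr
  rw [ENNReal.mul_le_mul_iff_left hB0 hBt'] at h2
  rw [dist_comm, Real.dist_eq]
  exact (ENNReal.ofReal_le_ofReal_iff (mul_nonneg M.2 hE)).1 h2

lemma tendsto_setAverage_ball [BorelSpace T] (hb : ∀ (x : T) (r : ℝ), 0 < r → 0 < μ (ball x r) ∧ μ (ball x r) < ⊤)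
    {u : T → ℝ} (hu : Continuous u) (hint : Integrable u μ) (x : T) {r : ℕ → ℝ}
    (hr0 : ∀ n, 0 < r n) (hr : Tendsto r atTop (𝓝 0)) :
    Tendsto (fun n => ⨍ z in ball x (r n), u z ∂μ) atTop (𝓝 (u x)) := by
  rw [Metric.tendsto_atTop]
  intro ε hε
  obtain ⟨δ, hδ, H⟩ := Metric.continuous_iff.1 hu x (ε / 2) (by linarith)
  obtain ⟨N, hN⟩ := (Metric.tendsto_atTop.1 hr) δ hδ
  refine ⟨N, fun n hn => ?_⟩
  obtain ⟨h0, ht⟩ := hb x (r n) (hr0 n)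
  have h1 := abs_setAverage_sub_mul_le h0.ne' ht.ne (hint.integrableOn (s := ball x (r n))) (u x)
  have h2 : ∫⁻ z in ball x (r n), ENNReal.ofReal |u z - u x| ∂μ ≤
      ENNReal.ofReal (ε / 2) * μ (ball x (r n)) := by
    rw [← setLIntegral_const]
    refine setLIntegral_mono measurable_const fun z hz => ENNReal.ofReal_le_ofReal ?_
    have := hN n hn
    rw [Real.dist_eq, sub_zero, abs_of_pos (hr0 n)] at this
    exact (H z ((mem_ball.1 hz).trans this)).le
  have h3 := h1.trans h2
  rw [ENNReal.mul_le_mul_iff_left h0.ne' ht.ne, ENNReal.ofReal_le_ofReal_iff (by linarith)] at h3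
  rw [Real.dist_eq]
  linarith

/-- A continuous function is Lipschitz, quantitatively, on the set of points at which all averages
of one of its upper gradients are bounded. -/
lemma abs_sub_le_of_notMem_badSet [BorelSpace T] [CompactSpace T] {C : ℝ≥0}
    (hC : ∀ (x : T) (r : ℝ), 0 < r → μ (ball x (2 * r)) ≤ C * μ (ball x r))
    {CP lP : ℝ} (hP : SupportsPoincare μ CP lP) [IsFiniteMeasure μ] {u : T → ℝ}
    (hu : Continuous u) {g : T → ℝ≥0∞} (hg : Measurable g) (hug : IsUpperGradient u g)
    {lam : ℝ≥0} {x y : T} (hx : x ∉ badSet μ g lam) (hy : y ∉ badSet μ g lam) :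
    |u x - u y| ≤ (12 * C * max CP 0 + 4 * C ^ 2 * max CP 0) * lam * dist x y := by
  obtain ⟨hb, hP⟩ := hP
  set K : ℝ := max CP 0 with hK
  have hK0 : 0 ≤ K := le_max_right _ _
  rcases eq_or_lt_of_le (dist_nonneg (x := x) (y := y)) with hd | hd
  · rw [dist_eq_zero.1 hd.symm]; simp
  set d := dist x y with hd'
  have hint : Integrable u μ := hu.integrable_of_hasCompactSupport (HasCompactSupport.of_compactSpace u)
  -- the Poincaré inequality on a ball centred at a good point
  have hpoin : ∀ z, z ∉ badSet μ g lam → ∀ r : ℝ, 0 < r →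
      ∫⁻ w in ball z r, ENNReal.ofReal |u w - ⨍ v in ball z r, u v ∂μ| ∂μ ≤
        ENNReal.ofReal (2 * K * lam * r) * μ (ball z r) := by
    intro z hz r hr
    obtain ⟨h0, ht⟩ := hb z r hr
    have h1 := hP u g hint.locallyIntegrable hg hug z r hr
    rw [ENNReal.div_le_iff h0.ne' ht.ne] at h1
    refine h1.trans ?_
    gcongr
    have h2 : (∫⁻ y in ball z (lP * r), g y ∂μ) / μ (ball z (lP * r)) ≤ lam := by
      rcases le_or_gt (lP * r) 0 with h | h
      · simp [ball_eq_empty.2 h]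
      · exact ENNReal.div_le_of_le_mul (setLIntegral_le_of_notMem_badSet hz h)
    have h3 : CP * diam (ball z r) ≤ K * (2 * r) :=
      mul_le_mul (le_max_left _ _) (diam_ball hr.le) diam_nonneg hK0
    calc _ ≤ ENNReal.ofReal (K * (2 * r)) * lam := by gcongr
      _ = _ := by
        rw [← ENNReal.ofReal_coe_nnreal (p := lam), ← ENNReal.ofReal_mul (by positivity)]
        ring_nf
  have htel : ∀ z, z ∉ badSet μ g lam → ∀ R : ℝ, 0 < R →
      dist (⨍ v in ball z R, u v ∂μ) (u z) ≤ 4 * C * K * lam * R := by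
    intro z hz R hR
    have hrpos : ∀ n : ℕ, 0 < R / 2 ^ n := fun n => by positivity
    have hlim := tendsto_setAverage_ball hb hu hint z (r := fun n : ℕ => R / 2 ^ n) hrpos (by
      have := (tendsto_pow_atTop_nhds_zero_of_lt_one (r := (1 / 2 : ℝ)) (by norm_num)
        (by norm_num)).const_mul R
      rw [mul_zero] at this
      refine this.congr fun n => ?_
      rw [one_div, inv_pow, div_eq_mul_inv])
    have := dist_le_of_le_geometric_two_of_tendsto₀ (C := 4 * C * K * lam * R)
      (f := fun n : ℕ => ⨍ v in ball z (R / 2 ^ n), u v ∂μ) (fun n => ?_) hlim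
    · simpa using this
    · have h2 : R / 2 ^ n = 2 * (R / 2 ^ (n + 1)) := by rw [pow_succ]; field_simp
      have h3 := dist_setAverage_le (μ := μ) (u := u) (M := C) (E := 2 * K * lam * (R / 2 ^ n))
        (B' := ball z (R / 2 ^ (n + 1))) (B := ball z (R / 2 ^ n)) (by positivity)
        (ball_subset_ball (by rw [h2]; linarith [hrpos (n + 1)]))
        (hb z _ (hrpos _)).1.ne' (hb z _ (hrpos _)).2.ne
        (by rw [h2]; exact hC _ _ (hrpos _)) hint.integrableOn (hpoin z hz _ (hrpos n))
      refine h3.trans (le_of_eq ?_)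
      field_simp
      ring
  have hxa := htel x hx (2 * d) (by linarith)
  have hya := htel y hy d hd
  have hsub : ball y d ⊆ ball x (2 * d) := fun w hw => by
    have h1 := mem_ball.1 hw
    have h2 := dist_triangle w y x
    rw [mem_ball]
    rw [dist_comm y x] at h2
    linarith
  have hM : μ (ball x (2 * d)) ≤ (C ^ 2 : ℝ≥0) * μ (ball y d) := by
    calc μ (ball x (2 * d)) ≤ μ (ball y (2 * (2 * d))) := measure_mono fun w hw => by
          have h1 := mem_ball.1 hw
          have h2 := dist_triangle w x y
          rw [mem_ball]
          linarith
      _ ≤ C * μ (ball y (2 * d)) := hC _ _ (by linarith)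
      _ ≤ C * (C * μ (ball y d)) := by gcongr; exact hC _ _ hd
      _ = _ := by rw [ENNReal.coe_pow, pow_two, mul_assoc]
  have hxy := dist_setAverage_le (μ := μ) (u := u) (E := 2 * K * lam * (2 * d)) (by positivity)
    hsub (hb y d hd).1.ne' (hb x _ (by linarith)).2.ne hM hint.integrableOn
    (hpoin x hx _ (by linarith))
  rw [← Real.dist_eq]
  have h1 := dist_triangle4 (u x) (⨍ v in ball x (2 * d), u v ∂μ) (⨍ v in ball y d, u v ∂μ) (u y)
  rw [dist_comm (u x) (⨍ v in ball x (2 * d), u v ∂μ)] at h1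
  push_cast at hxy
  nlinarith [h1, hxa, hya, hxy]

end Telescoping

end

section

lemma lintegral_Icc_add (g : ℝ → ℝ≥0∞) {r s t : ℝ} (hrs : r ≤ s) (hst : s ≤ t) :
    (∫⁻ x in Icc r s, g x) + (∫⁻ x in Icc s t, g x) = ∫⁻ x in Icc r t, g x := by
  rw [← Measure.restrict_congr_set (Ioc_ae_eq_Icc (a := s) (b := t)),
    ← Icc_union_Ioc_eq_Icc hrs hst]
  refine (lintegral_union measurableSet_Ioc ?_).symm
  exact disjoint_left.2 fun x h1 h2 => absurd h1.2 (not_le.2 h2.1)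

section Approximation

variable {T : Type*} [MetricSpace T]

/-- A lower semicontinuous function is the limit of an increasing sequence of continuous
functions. -/
lemma exists_continuous_monotone_approx [Nonempty T] {ρ : T → ℝ≥0∞} (hρ : LowerSemicontinuous ρ)
    (h1 : ∀ x, 1 ≤ ρ x) : ∃ φ : ℕ → T → ℝ≥0, (∀ n, Continuous (φ n)) ∧ (∀ n x, 1 ≤ φ n x) ∧
      (∀ n x, (φ n x : ℝ≥0∞) ≤ ρ x) ∧ (∀ x, Monotone fun n => φ n x) ∧
      ∀ x, ρ x ≤ ⨆ n, (φ n x : ℝ≥0∞) := by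
  set a : ℕ → T → ℝ≥0 := fun n y => (min (ρ y) (n + 1 : ℝ≥0)).toNNReal with ha
  have hat : ∀ (n : ℕ) y, min (ρ y) (n + 1 : ℝ≥0) ≠ ⊤ := fun n y =>
    ((min_le_right _ _).trans_lt ENNReal.coe_lt_top).ne
  have hac : ∀ n y, (a n y : ℝ≥0∞) = min (ρ y) (n + 1 : ℝ≥0) := fun n y =>
    ENNReal.coe_toNNReal (hat n y)
  have ha1 : ∀ n y, 1 ≤ a n y := fun n y => by
    rw [← ENNReal.coe_le_coe, hac, ENNReal.coe_one]
    exact le_min (h1 y) (by exact_mod_cast le_add_self)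
  have hamono : ∀ y, Monotone fun n => a n y := fun y m n hmn => by
    simp only
    rw [← ENNReal.coe_le_coe, hac, hac]
    exact min_le_min le_rfl (by gcongr)
  set ψ : ℕ → T → ℝ := fun n x => ⨅ y, ((a n y : ℝ) + n * dist x y) with hψ
  have hbdd : ∀ n x, BddBelow (range fun y => ((a n y : ℝ) + n * dist x y)) := fun n x =>
    ⟨0, by rintro _ ⟨y, rfl⟩; positivity⟩
  have hψ1 : ∀ n x, 1 ≤ ψ n x := fun n x => le_ciInf fun y => by
    have : (1 : ℝ) ≤ a n y := by exact_mod_cast ha1 n y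
    have : 0 ≤ (n : ℝ) * dist x y := by positivity
    linarith
  have hlip : ∀ n : ℕ, LipschitzWith n (ψ n) := fun n => by
    refine LipschitzWith.of_le_add_mul _ fun x y => ?_
    rw [← sub_le_iff_le_add]
    refine le_ciInf fun z => ?_
    have h2 := ciInf_le (hbdd n x) z
    have h3 := mul_le_mul_of_nonneg_left (dist_triangle x y z) (Nat.cast_nonneg (α := ℝ) n)
    have h4 : ((n : ℝ≥0) : ℝ) = n := by simp
    rw [h4]
    simp only [hψ]
    linarith
  refine ⟨fun n x => (ψ n x).toNNReal, fun n => continuous_real_toNNReal.comp (hlip n).continuous,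
    fun n x => ?_, fun n x => ?_, fun x m n hmn => ?_, fun x => ?_⟩
  · rw [← Real.toNNReal_one]; exact Real.toNNReal_le_toNNReal (hψ1 n x)
  · have h2 : ψ n x ≤ a n x := by simpa using ciInf_le (hbdd n x) x
    have h3 : (ψ n x).toNNReal ≤ a n x := Real.toNNReal_le_iff_le_coe.2 h2
    calc ((ψ n x).toNNReal : ℝ≥0∞) ≤ a n x := by exact_mod_cast h3
      _ ≤ ρ x := by rw [hac]; exact min_le_left _ _
  · refine Real.toNNReal_le_toNNReal (le_ciInf fun y => (ciInf_le (hbdd m x) y).trans ?_)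
    have h2 : (a m y : ℝ) ≤ a n y := by exact_mod_cast hamono y hmn
    have h3 : (m : ℝ) ≤ n := by exact_mod_cast hmn
    have h4 := mul_le_mul_of_nonneg_right h3 (dist_nonneg (x := x) (y := y))
    linarith
  · refine le_of_forall_lt fun c hc => ?_
    obtain ⟨c', hcc', hc'⟩ := ENNReal.lt_iff_exists_nnreal_btwn.1 hc
    refine hcc'.trans_le ?_
    obtain ⟨r, hr, hball⟩ := Metric.eventually_nhds_iff.1 (hρ x c' hc')
    obtain ⟨n, hn⟩ := exists_nat_ge (max (c' : ℝ) (c' / r))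
    refine le_trans ?_ (le_iSup _ n)
    have h2 : (c' : ℝ) ≤ ψ n x := le_ciInf fun y => by
      rcases lt_or_ge (dist x y) r with h3 | h3
      · have h4 : c' ≤ a n y := by
          rw [← ENNReal.coe_le_coe, hac]
          refine le_min (hball (by rwa [dist_comm])).le ?_
          rw [ENNReal.coe_le_coe, ← NNReal.coe_le_coe]
          push_cast
          linarith [(le_max_left (c' : ℝ) (c' / r)).trans hn]
        have h5 : (c' : ℝ) ≤ a n y := by exact_mod_cast h4
        have : 0 ≤ (n : ℝ) * dist x y := by positivity
        linarith
      · have h4 := (le_max_right (c' : ℝ) (c' / r)).trans hn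
        rw [div_le_iff₀ hr] at h4
        have h5 := mul_le_mul_of_nonneg_left h3 (Nat.cast_nonneg (α := ℝ) n)
        have h6 : (0 : ℝ) ≤ a n y := (a n y).2
        linarith
    exact ENNReal.coe_le_coe.2 (NNReal.le_toNNReal_of_coe_le h2)

end Approximation

section CoarsePaths

variable {T : Type*} [MetricSpace T] [MeasurableSpace T]

/-- A possibly discontinuous path from `x` to `y`, parametrized by `[0, ℓ]`, which is
`1`-Lipschitz up to an additive error `ε`. -/
structure CoarsePath (ε ℓ : ℝ) (x y : T) (γ : ℝ → T) : Prop where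
  measurable : Measurable γ
  nonneg : 0 ≤ ℓ
  start : γ 0 = x
  finish : γ ℓ = y
  dist_le : ∀ s t, 0 ≤ s → s ≤ t → t ≤ ℓ → dist (γ s) (γ t) ≤ t - s + ε
  dist_finish_le : ∀ s, 0 ≤ s → s ≤ ℓ → dist (γ s) y ≤ ℓ - s

lemma CoarsePath.const {ε : ℝ} (hε : 0 ≤ ε) (x : T) : CoarsePath ε 0 x x fun _ => x where
  measurable := measurable_const
  nonneg := le_rfl
  start := rfl
  finish := rfl
  dist_le s t _ hst _ := by simp only [dist_self]; linarith
  dist_finish_le s h1 h2 := by simp only [dist_self]; linarith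

lemma CoarsePath.extend {ε ℓ : ℝ} {x y z : T} {γ : ℝ → T} (h : CoarsePath ε ℓ x y γ)
    (hz : dist y z ≤ ε) :
    CoarsePath ε (ℓ + dist y z) x z fun t => if t ≤ ℓ then γ t else z where
  measurable := Measurable.ite measurableSet_Iic h.measurable measurable_const
  nonneg := add_nonneg h.nonneg dist_nonneg
  start := by simp only [if_pos h.nonneg, h.start]
  finish := by
    rcases eq_or_lt_of_le (dist_nonneg (x := y) (y := z)) with h0 | h0
    · rw [← h0, add_zero, if_pos le_rfl, h.finish, dist_eq_zero.1 h0.symm]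
    · exact if_neg (by linarith)
  dist_le s t hs hst ht := by
    have := h.dist_le s t hs hst
    split_ifs with h1 h2 h2
    · exact this h2
    · have h3 := h.dist_finish_le s hs h1
      have h4 := dist_triangle (γ s) y z
      linarith [not_le.1 h2]
    · exact absurd (hst.trans h2) h1
    · rw [dist_self]; linarith [dist_nonneg (x := y) (y := z)]
  dist_finish_le s hs hst := by
    split_ifs with h1
    · have h3 := h.dist_finish_le s hs h1
      have h4 := dist_triangle (γ s) y z
      linarith
    · rw [dist_self]; linarith

/-- The least cost of a coarse path from `x` to `y`. -/
def coarseDist (φ : T → ℝ≥0) (ε : ℝ) (x y : T) : ℝ≥0∞ :=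
  ⨅ (ℓ : ℝ) (γ : ℝ → T) (_ : CoarsePath ε ℓ x y γ), ∫⁻ t in Icc 0 ℓ, (φ (γ t) : ℝ≥0∞)

lemma coarseDist_self (φ : T → ℝ≥0) {ε : ℝ} (hε : 0 ≤ ε) (x : T) : coarseDist φ ε x x = 0 := by
  refine le_antisymm ?_ zero_le
  refine (iInf₂_le_of_le (0 : ℝ) (fun _ => x) (iInf_le _ (CoarsePath.const hε x))).trans ?_
  simp

lemma coarseDist_le_add (φ : T → ℝ≥0) {ε : ℝ} (x : T) {y z : T} (hz : dist y z ≤ ε) :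
    coarseDist φ ε x z ≤ coarseDist φ ε x y + φ z * edist y z := by
  conv_rhs => rw [coarseDist]
  simp only [ENNReal.iInf_add]
  refine le_iInf fun ℓ => le_iInf fun γ => le_iInf fun h => ?_
  refine (iInf₂_le_of_le (ℓ + dist y z) _ (iInf_le _ (h.extend hz))).trans ?_
  rw [← lintegral_Icc_add _ h.nonneg (le_add_of_nonneg_right dist_nonneg)]
  refine add_le_add (le_of_eq ?_) ?_
  · refine setLIntegral_congr_fun measurableSet_Icc fun t (ht : t ∈ Icc 0 ℓ) => ?_
    simp only [if_pos ht.2]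
  · rw [← Measure.restrict_congr_set (Ioc_ae_eq_Icc (a := ℓ))]
    refine (setLIntegral_mono (g := fun _ => (φ z : ℝ≥0∞)) measurable_const
      fun t (ht : t ∈ Ioc ℓ _) => ?_).trans ?_
    · simp only [if_neg (not_le.2 ht.1), le_refl]
    · rw [setLIntegral_const, Real.volume_Ioc, add_sub_cancel_left, edist_dist]

/-- The truncated coarse distance. -/
def truncCoarseDist (φ : T → ℝ≥0) (ε : ℝ) (M : ℝ≥0) (x y : T) : ℝ :=
  (min (coarseDist φ ε x y) M).toReal

lemma edist_truncCoarseDist_le (φ : T → ℝ≥0) {ε : ℝ} {M : ℝ≥0} (x : T) {y z : T}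
    (hz : dist y z ≤ ε) {K : ℝ≥0} (hy : φ y ≤ K) (hzK : φ z ≤ K) :
    edist (truncCoarseDist φ ε M x y) (truncCoarseDist φ ε M x z) ≤ K * edist y z := by
  have key : ∀ y z : T, dist y z ≤ ε → φ z ≤ K →
      truncCoarseDist φ ε M x z ≤ truncCoarseDist φ ε M x y + K * dist y z := by
    intro y z hz hzK
    have hne : ∀ w, min (coarseDist φ ε x w) M ≠ ⊤ := fun w =>
      ((min_le_right _ _).trans_lt ENNReal.coe_lt_top).ne
    have h1 : min (coarseDist φ ε x z) M ≤
        min (coarseDist φ ε x y) M + ENNReal.ofReal (K * dist y z) := by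
      rw [← min_add_add_right]
      refine min_le_min ?_ le_self_add
      refine (coarseDist_le_add φ x hz).trans ?_
      rw [ENNReal.ofReal_mul (p := (K : ℝ)) K.2, edist_dist, ENNReal.ofReal_coe_nnreal]
      gcongr
    have h2 := ENNReal.toReal_mono (ENNReal.add_ne_top.2 ⟨hne y, ENNReal.ofReal_ne_top⟩) h1
    rwa [ENNReal.toReal_add (hne y) ENNReal.ofReal_ne_top,
      ENNReal.toReal_ofReal (by positivity)] at h2
  rw [edist_dist, edist_dist, ← ENNReal.ofReal_coe_nnreal, ← ENNReal.ofReal_mul (p := (K : ℝ)) K.2]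
  refine ENNReal.ofReal_le_ofReal ?_
  rw [Real.dist_eq, abs_sub_le_iff]
  have h1 := key y z hz hzK
  have h2 := key z y (by rwa [dist_comm]) hy
  rw [dist_comm z y] at h2
  constructor <;> linarith

lemma continuous_truncCoarseDist [CompactSpace T] {φ : T → ℝ≥0} (hφ : Continuous φ) {ε : ℝ}
    (hε : 0 < ε) (M : ℝ≥0) (x : T) : Continuous (truncCoarseDist φ ε M x) := by
  obtain ⟨K, hK⟩ := (isCompact_range hφ).bddAbove
  have hK : ∀ y, φ y ≤ K := fun y => hK ⟨y, rfl⟩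
  refine continuous_iff_continuousAt.2 fun y => ?_
  have hlip : LipschitzOnWith K (truncCoarseDist φ ε M x) (ball y (ε / 2)) := fun z hz w hw => by
    refine edist_truncCoarseDist_le φ x ?_ (hK z) (hK w)
    linarith [dist_triangle_right z w y, mem_ball.1 hz, mem_ball.1 hw]
  exact hlip.continuousOn.continuousAt (ball_mem_nhds y (by linarith))

lemma isUpperGradient_truncCoarseDist {φ : T → ℝ≥0} (hφ : Continuous φ) (h1 : ∀ x, 1 ≤ φ x)
    {ε : ℝ} (hε : 0 < ε) (M : ℝ≥0) (x : T) :
    IsUpperGradient (truncCoarseDist φ ε M x) (fun y => 2 * (φ y : ℝ≥0∞)) := by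
  intro γ
  set u := truncCoarseDist φ ε M x with hu
  refine rel_of_locally (P := fun r s => edist (u (γ.toFun r)) (u (γ.toFun s)) ≤
    ∫⁻ t in Icc r s, 2 * (φ (γ.toFun t) : ℝ≥0∞)) γ.hab ?_ ?_
  · intro r s t _ hrs hst _ h2 h3
    rw [← lintegral_Icc_add _ hrs hst]
    exact (edist_triangle _ _ _).trans (add_le_add h2 h3)
  · intro t ht
    have hcont : ContinuousOn (fun r => (φ (γ.toFun r) : ℝ)) (Icc γ.a γ.b) :=
      NNReal.continuous_coe.comp_continuousOn (hφ.comp_continuousOn γ.lip.continuousOn)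
    obtain ⟨δ, hδ, H⟩ := Metric.continuousOn_iff.1 hcont t ht (1 / 2) (by norm_num)
    refine ⟨min δ (ε / 2), by positivity, fun r hr s hs h2 hrs h3 => ?_⟩
    have h4 := min_le_left δ (ε / 2)
    have h5 := min_le_right δ (ε / 2)
    have hclose : ∀ w ∈ Icc r s, dist (φ (γ.toFun w) : ℝ) (φ (γ.toFun t)) < 1 / 2 := fun w hw => by
      refine H w ⟨hr.1.trans hw.1, hw.2.trans hs.2⟩ ?_
      rw [Real.dist_eq, abs_lt]
      constructor <;> linarith [hw.1, hw.2]
    set K : ℝ≥0 := max (φ (γ.toFun r)) (φ (γ.toFun s)) with hK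
    have hK2 : ∀ w ∈ Icc r s, K ≤ 2 * φ (γ.toFun w) := fun w hw => by
      have hw' := abs_lt.1 (hclose w hw)
      have h6 := abs_lt.1 (hclose r ⟨le_rfl, hrs⟩)
      have h7 := abs_lt.1 (hclose s ⟨hrs, le_rfl⟩)
      have h8 : (1 : ℝ) ≤ φ (γ.toFun w) := by exact_mod_cast h1 _
      refine max_le ?_ ?_ <;> rw [← NNReal.coe_le_coe] <;> push_cast <;> linarith [hw'.1, h6.2, h7.2]
    have hd := γ.lip.dist_le_mul r hr s hs
    rw [NNReal.coe_one, one_mul, Real.dist_eq, abs_sub_comm, abs_of_nonneg (sub_nonneg.2 hrs)] at hd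
    calc edist (u (γ.toFun r)) (u (γ.toFun s)) ≤ K * edist (γ.toFun r) (γ.toFun s) :=
          edist_truncCoarseDist_le φ x (by linarith) (le_max_left _ _) (le_max_right _ _)
      _ ≤ K * ENNReal.ofReal (s - r) := by
          rw [edist_dist]; gcongr
      _ = ∫⁻ t in Icc r s, (K : ℝ≥0∞) := by rw [setLIntegral_const, Real.volume_Icc]
      _ ≤ _ := by
          refine setLIntegral_mono' measurableSet_Icc fun w hw => ?_
          exact_mod_cast hK2 w hw

end CoarsePaths

end

section

variable {T : Type*} [MetricSpace T] [MeasurableSpace T]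

lemma badSet_mono {μ : Measure T} {g h : T → ℝ≥0∞} (hgh : ∀ x, g x ≤ h x) (lam : ℝ≥0∞) :
    badSet μ g lam ⊆ badSet μ h lam := fun _ ⟨r, hr, hx⟩ =>
  ⟨r, hr, hx.trans_le (lintegral_mono fun y => hgh y)⟩

/-- Two points at which all averages of `φ` are bounded are joined by a coarse path of controlled
cost. -/
lemma exists_coarsePath [BorelSpace T] [CompactSpace T] {μ : Measure T} {C : ℝ≥0}
    (hC : ∀ (x : T) (r : ℝ), 0 < r → μ (ball x (2 * r)) ≤ C * μ (ball x r))
    {CP lP : ℝ} (hP : SupportsPoincare μ CP lP) [IsFiniteMeasure μ] {φ : T → ℝ≥0}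
    (hφ : Continuous φ) (hφ1 : ∀ x, 1 ≤ φ x) {lam : ℝ≥0} {x y : T}
    (hx : x ∉ badSet μ (fun z => φ z) lam) (hy : y ∉ badSet μ (fun z => φ z) lam)
    {ε : ℝ} (hε : 0 < ε) {B : ℝ}
    (hB : 2 * (12 * C * max CP 0 + 4 * C ^ 2 * max CP 0) * lam * dist x y < B) :
    ∃ ℓ γ, CoarsePath ε ℓ x y γ ∧ ∫⁻ t in Icc 0 ℓ, (φ (γ t) : ℝ≥0∞) ≤ ENNReal.ofReal B := by
  set A : ℝ := 12 * C * max CP 0 + 4 * C ^ 2 * max CP 0 with hA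
  have hA0 : 0 ≤ A := by positivity
  have hB0 : 0 < B := lt_of_le_of_lt (by positivity) hB
  have hbad : ∀ z, z ∉ badSet μ (fun z => (φ z : ℝ≥0∞)) lam →
      z ∉ badSet μ (fun z => 2 * (φ z : ℝ≥0∞)) (2 * lam : ℝ≥0) := by
    rintro z hz ⟨r, hr, h⟩
    refine hz ⟨r, hr, ?_⟩
    rw [lintegral_const_mul _ (by fun_prop), ENNReal.coe_mul, mul_assoc] at h
    exact lt_of_mul_lt_mul_left' h
  have h1 := abs_sub_le_of_notMem_badSet hC hP
    (continuous_truncCoarseDist hφ hε (Real.toNNReal B) x)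
    (by fun_prop) (isUpperGradient_truncCoarseDist hφ hφ1 hε (Real.toNNReal B) x)
    (hbad x hx) (hbad y hy)
  have h0 : truncCoarseDist φ ε (Real.toNNReal B) x x = 0 := by
    simp [truncCoarseDist, coarseDist_self φ hε.le]
  have h2 : truncCoarseDist φ ε (Real.toNNReal B) x y < B := by
    rw [h0, zero_sub, abs_neg] at h1
    refine (le_abs_self _).trans_lt (h1.trans_lt ?_)
    push_cast
    linarith
  have h3 : coarseDist φ ε x y < ENNReal.ofReal B := by
    by_contra h
    rw [not_lt] at h
    have : min (coarseDist φ ε x y) (Real.toNNReal B) = ENNReal.ofReal B := min_eq_right h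
    rw [truncCoarseDist, this, ENNReal.toReal_ofReal hB0.le] at h2
    exact lt_irrefl _ h2
  simp only [coarseDist, iInf_lt_iff] at h3
  obtain ⟨ℓ, γ, h, h4⟩ := h3
  exact ⟨ℓ, γ, h, h4.le⟩

/-- Coarse paths of bounded cost converge to a path. -/
lemma exists_uPath_of_coarsePath [BorelSpace T] [CompactSpace T] {φ : ℕ → T → ℝ≥0}
    (hφ : ∀ n, Continuous (φ n)) (hφ1 : ∀ n x, 1 ≤ φ n x) (hmono : ∀ x, Monotone fun n => φ n x)
    {x y : T} {ℓ : ℕ → ℝ} {γ : ℕ → ℝ → T}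
    (hγ : ∀ n : ℕ, CoarsePath (1 / (n + 1 : ℝ)) (ℓ n) x y (γ n)) {B : ℝ} (hB0 : 0 ≤ B)
    (hB : ∀ n, ∫⁻ t in Icc 0 (ℓ n), (φ n (γ n t) : ℝ≥0∞) ≤ ENNReal.ofReal B) :
    ∃ β : UPath T, β.start = x ∧ β.finish = y ∧
      β.integral (fun z => ⨆ n, (φ n z : ℝ≥0∞)) ≤ ENNReal.ofReal B := by
  have hℓB : ∀ n, ℓ n ∈ Icc 0 B := fun n => by
    refine ⟨(hγ n).nonneg, ?_⟩
    rw [← ENNReal.ofReal_le_ofReal_iff hB0]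
    refine le_trans ?_ (hB n)
    calc ENNReal.ofReal (ℓ n) = ∫⁻ t in Icc 0 (ℓ n), 1 := by simp
      _ ≤ _ := lintegral_mono fun t => ENNReal.one_le_coe_iff.2 (hφ1 n _)
  set c : ℕ → ℝ → ℝ := fun n t => max 0 (min t (ℓ n)) with hc
  have hcmem : ∀ n t, 0 ≤ c n t ∧ c n t ≤ ℓ n := fun n t =>
    ⟨le_max_left _ _, max_le (hℓB n).1 (min_le_right _ _)⟩
  have hclip : ∀ n s t, |c n s - c n t| ≤ |s - t| := fun n s t => by
    have h1 := abs_max_sub_max_le_abs (min s (ℓ n)) (min t (ℓ n)) 0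
    have h2 := abs_min_sub_min_le_max s (ℓ n) t (ℓ n)
    rw [sub_self, abs_zero, max_eq_left (abs_nonneg _)] at h2
    simp only [hc, max_comm (0 : ℝ)]
    exact h1.trans h2
  set β : ℕ → ℝ → T := fun n t => γ n (c n t) with hβ
  have hβdist : ∀ n s t, dist (β n s) (β n t) ≤ |s - t| + 1 / (n + 1 : ℝ) := by
    intro n s t
    have h2 := hclip n s t
    rcases le_total (c n s) (c n t) with h | h
    · have h1 := (hγ n).dist_le _ _ (hcmem n s).1 h (hcmem n t).2
      have h3 := neg_le_abs (c n s - c n t)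
      simp only [hβ]; linarith
    · have h1 := (hγ n).dist_le _ _ (hcmem n t).1 h (hcmem n s).2
      have h3 := le_abs_self (c n s - c n t)
      rw [dist_comm] at h1
      simp only [hβ]; linarith
  obtain ⟨⟨b, ⟨L, hL⟩⟩, ψ, hψ, hlim⟩ := CompactSpace.tendsto_subseq
    (X := (ℚ → T) × Icc (0 : ℝ) B) fun n => (fun q : ℚ => β n q, ⟨ℓ n, hℓB n⟩)
  have hlimq : ∀ q : ℚ, Tendsto (fun k => β (ψ k) q) atTop (𝓝 (b q)) := fun q =>
    (tendsto_pi_nhds.1 ((continuous_fst.tendsto _).comp hlim)) q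
  have hlimℓ : Tendsto (fun k => ℓ (ψ k)) atTop (𝓝 L) :=
    (continuous_subtype_val.tendsto _).comp ((continuous_snd.tendsto _).comp hlim)
  have hsmall : Tendsto (fun k => 1 / ((ψ k : ℝ) + 1)) atTop (𝓝 0) :=
    tendsto_one_div_add_atTop_nhds_zero_nat.comp hψ.tendsto_atTop
  have hcauchy : ∀ t : ℝ, CauchySeq fun k => β (ψ k) t := fun t => by
    rw [Metric.cauchySeq_iff']
    intro ε hε
    obtain ⟨q, hq1, hq2⟩ := exists_rat_btwn (show t < t + ε / 8 by linarith)
    obtain ⟨N, hN⟩ := Metric.cauchySeq_iff'.1 (hlimq q).cauchySeq (ε / 8) (by linarith)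
    obtain ⟨N', hN'⟩ := eventually_atTop.1 (hsmall.eventually_lt_const (show (0 : ℝ) < ε / 8 by linarith))
    have hq : |t - q| ≤ ε / 8 := abs_le.2 ⟨by linarith, by linarith⟩
    have hq' : |q - t| ≤ ε / 8 := by rwa [abs_sub_comm]
    refine ⟨max N N', fun n hn => ?_⟩
    have h1 := hβdist (ψ n) t q
    have h2 := hβdist (ψ (max N N')) q t
    have h3 := hN n (le_trans (le_max_left _ _) hn)
    have h4 := hN (max N N') (le_max_left _ _)
    rw [dist_comm] at h4
    have h5 := hN' n (le_trans (le_max_right _ _) hn)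
    have h6 := hN' (max N N') (le_max_right _ _)
    have h7 := dist_triangle4 (β (ψ n) t) (β (ψ n) q) (β (ψ (max N N')) q) (β (ψ (max N N')) t)
    have h8 := dist_triangle (β (ψ n) q) (β (ψ N) q) (β (ψ (max N N')) q)
    linarith
  choose α hα using fun t => cauchySeq_tendsto_of_complete (hcauchy t)
  have hαlip : LipschitzWith 1 α := LipschitzWith.of_dist_le_mul fun s t => by
    rw [NNReal.coe_one, one_mul]
    have h1 : Tendsto (fun k => dist (β (ψ k) s) (β (ψ k) t)) atTop (𝓝 (dist (α s) (α t))) :=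
      (hα s).dist (hα t)
    have h2 : Tendsto (fun k => |s - t| + 1 / ((ψ k : ℝ) + 1)) atTop (𝓝 (|s - t|)) := by
      simpa using hsmall.const_add (|s - t|)
    exact le_of_tendsto_of_tendsto' h1 h2 fun k => hβdist _ s t
  have hα0 : α 0 = x := by
    refine tendsto_nhds_unique (hα 0) (tendsto_const_nhds.congr fun k => ?_)
    have : c (ψ k) 0 = 0 := by simp [hc, (hℓB (ψ k)).1]
    simp only [hβ, this, (hγ (ψ k)).start]
  have hαL : α L = y := by
    refine tendsto_nhds_unique (hα L) ?_
    rw [tendsto_iff_dist_tendsto_zero]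
    have h1 : Tendsto (fun k => |L - ℓ (ψ k)| + 1 / ((ψ k : ℝ) + 1)) atTop (𝓝 0) := by
      have h2 : Tendsto (fun k => |L - ℓ (ψ k)|) atTop (𝓝 |L - L|) :=
        (tendsto_const_nhds.sub hlimℓ).abs
      simpa using h2.add hsmall
    refine squeeze_zero (fun _ => dist_nonneg) (fun k => ?_) h1
    have h2 : β (ψ k) (ℓ (ψ k)) = y := by
      have : c (ψ k) (ℓ (ψ k)) = ℓ (ψ k) := by simp [hc, (hℓB (ψ k)).1]
      simp only [hβ, this, (hγ (ψ k)).finish]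
    have := hβdist (ψ k) L (ℓ (ψ k))
    rwa [h2] at this
  refine ⟨⟨0, L, hL.1, α, hαlip.lipschitzOnWith⟩, hα0, hαL, ?_⟩
  set F : ℕ → ℝ → ℝ≥0∞ := fun k => (Icc 0 (ℓ (ψ k))).indicator
    fun t => (φ (ψ k) (γ (ψ k) t) : ℝ≥0∞) with hF
  have hFm : ∀ k, Measurable (F k) := fun k =>
    (((hφ _).measurable.comp (hγ _).measurable).coe_nnreal_ennreal).indicator measurableSet_Icc
  have hpt : ∀ t ∈ Ico 0 L, (⨆ n, (φ n (α t) : ℝ≥0∞)) ≤ liminf (fun k => F k t) atTop := by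
    intro t ht
    refine iSup_le fun n => ?_
    have h1 : Tendsto (fun k => (φ n (β (ψ k) t) : ℝ≥0∞)) atTop (𝓝 (φ n (α t))) :=
      ENNReal.tendsto_coe.2 (((hφ n).tendsto _).comp (hα t))
    rw [← h1.liminf_eq]
    refine liminf_le_liminf ?_
    filter_upwards [hlimℓ.eventually_const_lt ht.2, eventually_ge_atTop n] with k hk hkn
    have h2 : c (ψ k) t = t := by simp [hc, ht.1, hk.le]
    simp only [hF, hβ, h2]
    rw [indicator_of_mem (show t ∈ Icc 0 (ℓ (ψ k)) from ⟨ht.1, hk.le⟩)]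
    exact_mod_cast hmono _ (hkn.trans (hψ.id_le k))
  calc ∫⁻ t in Icc 0 L, (⨆ n, (φ n (α t) : ℝ≥0∞))
      = ∫⁻ t in Ico 0 L, (⨆ n, (φ n (α t) : ℝ≥0∞)) := by
        rw [Measure.restrict_congr_set Ico_ae_eq_Icc]
    _ ≤ ∫⁻ t in Ico 0 L, liminf (fun k => F k t) atTop :=
        setLIntegral_mono' measurableSet_Ico hpt
    _ ≤ ∫⁻ t, liminf (fun k => F k t) atTop := setLIntegral_le_lintegral _ _
    _ ≤ liminf (fun k => ∫⁻ t, F k t) atTop := lintegral_liminf_le hFm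
    _ ≤ ENNReal.ofReal B := by
        refine liminf_le_of_le (by isBoundedDefault) fun b hb => ?_
        obtain ⟨k, hk⟩ := hb.exists
        refine hk.trans ?_
        rw [hF, lintegral_indicator measurableSet_Icc]
        exact hB _

/-- Two points at which all averages of a lower semicontinuous function `ρ ≥ 1` are bounded are
joined by a path along which `ρ` has controlled integral. -/
lemma exists_uPath_integral_le [BorelSpace T] [CompactSpace T] {μ : Measure T} {C : ℝ≥0}
    (hC : ∀ (x : T) (r : ℝ), 0 < r → μ (ball x (2 * r)) ≤ C * μ (ball x r))
    {CP lP : ℝ} (hP : SupportsPoincare μ CP lP) [IsFiniteMeasure μ] :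
    ∃ K : ℝ≥0, ∀ (ρ : T → ℝ≥0∞), LowerSemicontinuous ρ → (∀ x, 1 ≤ ρ x) → ∀ (lam : ℝ≥0) (x y : T),
      x ∉ badSet μ ρ lam → y ∉ badSet μ ρ lam → ∃ γ : UPath T, γ.start = x ∧ γ.finish = y ∧
        γ.integral ρ ≤ K * lam * edist x y := by
  set A : ℝ := 2 * (12 * C * max CP 0 + 4 * C ^ 2 * max CP 0) with hA
  have hA0 : 0 ≤ A := by positivity
  refine ⟨Real.toNNReal (A + 1), fun ρ hρ hρ1 lam x y hx hy => ?_⟩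
  rcases eq_or_lt_of_le (dist_nonneg (x := x) (y := y)) with hd | hd
  · obtain rfl := dist_eq_zero.1 hd.symm
    exact ⟨⟨0, 0, le_rfl, fun _ => x, LipschitzWith.const' x |>.lipschitzOnWith⟩, rfl, rfl,
      by simp [UPath.integral]⟩
  have hlam : 1 ≤ lam := by
    obtain ⟨h0, ht⟩ := hP.1 x 1 one_pos
    have h1 := setLIntegral_le_of_notMem_badSet hx one_pos
    have h2 : 1 * μ (ball x 1) ≤ lam * μ (ball x 1) := by
      refine le_trans ?_ h1
      rw [← setLIntegral_const]
      exact lintegral_mono fun z => hρ1 z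
    rw [ENNReal.mul_le_mul_iff_left h0.ne' ht.ne] at h2
    exact_mod_cast h2
  have hlam' : (1 : ℝ) ≤ lam := by exact_mod_cast hlam
  have : Nonempty T := ⟨x⟩
  obtain ⟨φ, hφ, hφ1, hφρ, hmono, hsup⟩ := exists_continuous_monotone_approx hρ hρ1
  have hB : A * lam * dist x y < (A + 1) * lam * dist x y := by
    have : 0 < lam * dist x y := by positivity
    linarith
  have hex : ∀ n : ℕ, ∃ ℓ γ, CoarsePath (1 / (n + 1 : ℝ)) ℓ x y γ ∧
      ∫⁻ t in Icc 0 ℓ, (φ n (γ t) : ℝ≥0∞) ≤ ENNReal.ofReal ((A + 1) * lam * dist x y) := fun n =>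
    exists_coarsePath hC hP (hφ n) (hφ1 n) (fun h => hx (badSet_mono (hφρ n) _ h))
      (fun h => hy (badSet_mono (hφρ n) _ h)) (by positivity) hB
  choose ℓ γ hγ hγB using hex
  obtain ⟨β, h1, h2, h3⟩ := exists_uPath_of_coarsePath hφ hφ1 hmono hγ (by positivity) hγB
  refine ⟨β, h1, h2, ?_⟩
  calc β.integral ρ ≤ β.integral (fun z => ⨆ n, (φ n z : ℝ≥0∞)) := lintegral_mono fun t => hsup _
    _ ≤ _ := h3
    _ = _ := by
      rw [ENNReal.ofReal_mul (by positivity), ENNReal.ofReal_mul (by positivity), edist_dist,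
        ENNReal.ofReal_coe_nnreal]
      rfl

end

section

section LocalConnectivity

variable {T : Type*} [MetricSpace T]

lemma UPath.joinedIn (γ : UPath T) {W : Set T} (h : γ.InSet W) : JoinedIn W γ.start γ.finish := by
  refine ⟨γ.toPath, fun t => h _ ?_⟩
  obtain ⟨h0, h1⟩ := t.2
  constructor <;> nlinarith [γ.hab]

/-- The initial part of a path. -/
def UPath.sub (γ : UPath T) {r s : ℝ} (hr : γ.a ≤ r) (hrs : r ≤ s) (hs : s ≤ γ.b) : UPath T where
  a := r
  b := s
  hab := hrs
  toFun := γ.toFun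
  lip := γ.lip.mono (Icc_subset_Icc hr hs)

lemma exists_uPath_length_le [MeasurableSpace T] [BorelSpace T] [CompactSpace T] {μ : Measure T}
    {C : ℝ≥0} (hC : ∀ (x : T) (r : ℝ), 0 < r → μ (ball x (2 * r)) ≤ C * μ (ball x r))
    {CP lP : ℝ} (hP : SupportsPoincare μ CP lP) [IsFiniteMeasure μ] :
    ∃ K : ℝ≥0, ∀ x y : T, ∃ γ : UPath T, γ.start = x ∧ γ.finish = y ∧
      γ.b - γ.a ≤ K * dist x y := by
  obtain ⟨K, hK⟩ := exists_uPath_integral_le hC hP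
  have hbad : ∀ x : T, x ∉ badSet μ (fun _ => 1) 1 := by
    rintro x ⟨r, -, hr⟩
    simp at hr
  refine ⟨K, fun x y => ?_⟩
  obtain ⟨γ, h1, h2, h3⟩ := hK (fun _ => 1) lowerSemicontinuous_const (fun _ => le_rfl) 1 x y
    (hbad x) (hbad y)
  refine ⟨γ, h1, h2, ?_⟩
  have h4 : ENNReal.ofReal (γ.b - γ.a) ≤ ENNReal.ofReal (K * dist x y) := by
    rw [ENNReal.ofReal_mul (p := (K : ℝ)) K.2, ← edist_dist, ENNReal.ofReal_coe_nnreal]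
    simpa [UPath.integral] using h3
  exact (ENNReal.ofReal_le_ofReal_iff (by positivity)).1 h4

variable {K : ℝ≥0} (hK : ∀ x y : T, ∃ γ : UPath T, γ.start = x ∧ γ.finish = y ∧
      γ.b - γ.a ≤ K * dist x y)
include hK

lemma locallyPathConnectedSpace_of_exists_uPath : LocallyPathConnectedSpace T := by
  set s : T → ℝ → Set T := fun x r => {y | ∃ γ : UPath T, γ.start = x ∧ γ.finish = y ∧
    γ.b - γ.a < r} with hs
  refine LocallyPathConnectedSpace.of_bases (p := fun _ r => 0 < r) (s := s) ?_ ?_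
  · intro x
    refine ⟨fun t => ⟨fun ht => ?_, fun ⟨r, hr, hrt⟩ => ?_⟩⟩
    · obtain ⟨r, hr, hrt⟩ := Metric.mem_nhds_iff.1 ht
      refine ⟨r, hr, fun y hy => hrt ?_⟩
      obtain ⟨γ, rfl, rfl, h⟩ := hy
      rw [mem_ball, dist_comm]
      refine lt_of_le_of_lt ?_ h
      have := γ.lip.dist_le_mul γ.a ⟨le_rfl, γ.hab⟩ γ.b ⟨γ.hab, le_rfl⟩
      rwa [Real.dist_eq, abs_sub_comm, abs_of_nonneg (sub_nonneg.2 γ.hab), NNReal.coe_one,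
        one_mul] at this
    · refine mem_of_superset (ball_mem_nhds x (ε := r / (K + 1)) (by positivity))
        (Subset.trans (fun y hy => ?_) hrt)
      obtain ⟨γ, h1, h2, h3⟩ := hK x y
      refine ⟨γ, h1, h2, h3.trans_lt ?_⟩
      rw [mem_ball, dist_comm, lt_div_iff₀ (by positivity)] at hy
      nlinarith [dist_nonneg (x := x) (y := y), K.2]
  · intro x r hr
    refine ⟨x, ?_, ?_⟩
    · exact ⟨⟨0, 0, le_rfl, fun _ => x, by simp [LipschitzOnWith]⟩, rfl, rfl, by simpa using hr⟩
    · rintro y ⟨γ, rfl, rfl, h⟩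
      refine γ.joinedIn fun t ht => ?_
      refine ⟨γ.sub le_rfl ht.1 ht.2, rfl, rfl, lt_of_le_of_lt ?_ h⟩
      simp only [UPath.sub]
      linarith [ht.2]

lemma pathConnectedSpace_of_exists_uPath [Nonempty T] : PathConnectedSpace T where
  nonempty := inferInstance
  joined x y := by
    obtain ⟨γ, rfl, rfl, -⟩ := hK x y
    exact ⟨γ.toPath⟩

end LocalConnectivity

lemma _root_.IsLocalHomeomorph.locallyPathConnectedSpace {X Y : Type*} [TopologicalSpace X]
    [TopologicalSpace Y] [LocallyPathConnectedSpace Y] {f : X → Y} (hf : IsLocalHomeomorph f) :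
    LocallyPathConnectedSpace X := by
  choose e he hef using hf
  let : ChartedSpace Y X :=
    { atlas := range e
      chartAt := e
      mem_chart_source := he
      chart_mem_atlas := fun x => ⟨x, rfl⟩ }
  exact ChartedSpace.locallyPathConnectedSpace Y X

end

section

lemma hasDegree_one_of_exists_lift {T : Type*} [TopologicalSpace T] {x₀ : T} {α₀ : Path x₀ x₀}
    {g : T → UnitAddCircle} (hg : Continuous g)
    (H : ∀ (x : T) (γ : Path x x), IsDegreeOneLoop x₀ α₀ γ →
      ∃ k : C(I, ℝ), (∀ t, (k t : UnitAddCircle) = g (γ t)) ∧ k 1 = k 0 + 1) :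
    HasDegree x₀ α₀ g 1 := by
  refine ⟨hg, fun x γ hγ => ?_⟩
  obtain ⟨k, hk, hk1⟩ := H x γ hγ
  let P : Path (k 0) (k 0 + 1) := ⟨k, rfl, hk1⟩
  let Q : Path (k 0) (k 0 + 1) :=
    ⟨⟨fun t => k 0 + (t : ℝ), by fun_prop⟩, by simp, by simp⟩
  have h := (SimplyConnectedSpace.paths_homotopic P Q).map
    ⟨((↑) : ℝ → UnitAddCircle), AddCircle.continuous_mk' 1⟩
  have e1 : (γ.map hg).toContinuousMap = (P.map (AddCircle.continuous_mk' 1)).toContinuousMap :=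
    ContinuousMap.ext fun t => (hk t).symm
  have e2 : (stdLoop 1 (g x)).toContinuousMap =
      (Q.map (AddCircle.continuous_mk' 1)).toContinuousMap := by
    have h0 := hk 0
    rw [γ.source] at h0
    refine ContinuousMap.ext fun t => ?_
    change g x + ((((1 : ℤ) : ℝ) * (t : ℝ) : ℝ) : UnitAddCircle) =
      ((k 0 + (t : ℝ) : ℝ) : UnitAddCircle)
    simp [← h0]
  change Nonempty (ContinuousMap.HomotopyRel _ _ _)
  rw [e1, e2]
  exact h

section Lift

variable {T Tt : Type*} [MetricSpace T] [MetricSpace Tt] {x₀ : T} {α₀ : Path x₀ x₀} {π : Tt → T}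
  {τ : Tt → Tt}

/-- A continuous map of degree one lifts to a function on the universal cover which
the deck transformation increases by one. -/
lemma exists_lift_of_hasDegree_one [PathConnectedSpace T] [LocallyPathConnectedSpace T]
    (hcov : CoverSetup π) (hdeck : IsDeck π x₀ α₀ τ) {g : T → UnitAddCircle}
    (hg : HasDegree x₀ α₀ g 1) :
    ∃ h : Tt → ℝ, Continuous h ∧ (∀ y, (h y : UnitAddCircle) = g (π y)) ∧
      ∀ y, h (τ y) = h y + 1 := by
  obtain ⟨hπ, hsurj, -, hsc⟩ := hcov
  obtain ⟨hgc, hdeg⟩ := hg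
  have : LocallyPathConnectedSpace Tt := hπ.isLocalHomeomorph.locallyPathConnectedSpace
  have cov := AddCircle.isCoveringMap_coe (1 : ℝ)
  obtain ⟨y₀, -⟩ := hsurj x₀
  obtain ⟨c₀, hc₀⟩ := QuotientAddGroup.mk_surjective (g (π y₀))
  obtain ⟨F, ⟨-, hF⟩, -⟩ := cov.existsUnique_continuousMap_lifts
    (⟨g ∘ π, hgc.comp hπ.continuous⟩ : C(Tt, UnitAddCircle)) y₀ c₀ hc₀
  have hF' : ∀ y, (F y : UnitAddCircle) = g (π y) := fun y => congr_fun hF y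
  refine ⟨F, F.continuous, hF', fun y => ?_⟩
  let η : Path (π y) x₀ := PathConnectedSpace.somePath _ _
  let α := η.trans (α₀.trans η.symm)
  have hα : IsDegreeOneLoop x₀ α₀ α := ⟨η, Path.Homotopic.refl _⟩
  have hα0 : (α : C(I, T)) 0 = π y := α.source
  let γt := hπ.liftPath (α : C(I, T)) y hα0
  have hγt : ∀ t, π (γt t) = α t := fun t => congr_fun (hπ.liftPath_lifts (α : C(I, T)) y hα0) t
  have hγ0 : γt 0 = y := hπ.liftPath_zero _ _ _
  have hτ := hdeck.2.2 _ α hα γt hγt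
  rw [hγ0] at hτ
  rw [hτ]
  have h0 : ((α.map hgc) : C(I, UnitAddCircle)) 0 = (F y : UnitAddCircle) := by
    rw [hF']; exact (α.map hgc).source
  have h1 : ((stdLoop 1 (g (π y))) : C(I, UnitAddCircle)) 0 = (F y : UnitAddCircle) := by
    rw [hF']; exact (stdLoop 1 _).source
  have key := cov.liftPath_apply_one_eq_of_homotopicRel (hdeg _ α hα) (F y) h0 h1
  have e0 : F.comp γt = cov.liftPath (α.map hgc).toContinuousMap (F y) h0 := by
    rw [cov.eq_liftPath_iff']
    refine ⟨funext fun t => ?_, by simp [hγ0]⟩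
    simp only [ContinuousMap.coe_comp, Function.comp_apply]
    rw [hF', hγt]; rfl
  have e1 : (⟨fun t => F y + (t : ℝ), by fun_prop⟩ : C(I, ℝ)) =
      cov.liftPath (stdLoop 1 (g (π y))).toContinuousMap (F y) h1 := by
    rw [cov.eq_liftPath_iff']
    refine ⟨funext fun t => ?_, by simp⟩
    simp [stdLoop, ← hF']
  rw [← e0, ← e1] at key
  simpa using key

end Lift

end

section

section Fibers

variable {T Tt : Type*} [MetricSpace T] [MetricSpace Tt] {x₀ : T} {α₀ : Path x₀ x₀} {π : Tt → T}
  {τ : Tt → Tt}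

lemma isDegreeOneLoop_self {T : Type*} [TopologicalSpace T] {x₀ : T} (α₀ : Path x₀ x₀) :
    IsDegreeOneLoop x₀ α₀ α₀ := by
  refine ⟨Path.refl x₀, ?_⟩
  rw [← Path.Homotopic.Quotient.eq]
  simp

lemma exists_zpow_monodromyPerm_eq (hcov : CoverSetup π) (hgen : IsGenerator x₀ α₀)
    (e e' : π ⁻¹' {x₀}) :
    ∃ k : ℤ, ((hcov.1.monodromyPerm x₀ (FundamentalGroup.fromPath ⟦α₀⟧)) ^ k) e = e' := by
  have hsc := hcov.2.2.2
  let q : Path.Homotopic.Quotient (e : Tt) e' := ⟦PathConnectedSpace.somePath _ _⟧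
  let γ : Path.Homotopic.Quotient x₀ x₀ := (q.map ⟨π, hcov.1.continuous⟩).cast e.2.symm e'.2.symm
  obtain ⟨k, hk⟩ := hgen.2 γ
  have h1 : hcov.1.monodromy γ e = e' := hcov.1.monodromy_eq_of_map_eq q ((q.map ⟨π, hcov.1.continuous⟩).cast_rfl_rfl.symm.trans
      ((q.map ⟨π, hcov.1.continuous⟩).cast_cast _ _ _ _).symm)
  refine ⟨k, ?_⟩
  rw [← map_zpow, ← h1]
  exact congr_arg (fun δ => hcov.1.monodromy δ e) hk

lemma monodromyPerm_generator (hcov : CoverSetup π) (hdeck : IsDeck π x₀ α₀ τ) (e : π ⁻¹' {x₀}) :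
    (hcov.1.monodromyPerm x₀ (FundamentalGroup.fromPath ⟦α₀⟧) e : Tt) = τ e := by
  have h0 : (α₀ : C(I, T)) 0 = π e := α₀.source.trans e.2.symm
  have h := hdeck.2.2 x₀ α₀ (isDegreeOneLoop_self α₀) (hcov.1.liftPath (α₀ : C(I, T)) e h0)
    fun t => congr_fun (hcov.1.liftPath_lifts (α₀ : C(I, T)) e h0) t
  rw [hcov.1.liftPath_zero] at h
  rw [h]
  rfl

variable {h : Tt → ℝ} {g : T → UnitAddCircle}

/-- A lift of a degree one map is injective on fibers. -/
lemma eq_of_lift_eq [PathConnectedSpace T] (hcov : CoverSetup π) (hgen : IsGenerator x₀ α₀)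
    (hdeck : IsDeck π x₀ α₀ τ) (hc : Continuous h) (hg : Continuous g)
    (hl : ∀ y, (h y : UnitAddCircle) = g (π y)) (hτ : ∀ y, h (τ y) = h y + 1)
    {e e' : Tt} (he : π e = π e') (hh : h e = h e') : e = e' := by
  have base : ∀ e e' : π ⁻¹' {x₀}, h e = h e' → e = e' := by
    intro e e' hee
    obtain ⟨k, hk⟩ := exists_zpow_monodromyPerm_eq hcov hgen e e'
    set θ := hcov.1.monodromyPerm x₀ (FundamentalGroup.fromPath ⟦α₀⟧) with hθ
    have h1 : ∀ e : π ⁻¹' {x₀}, h (θ e : Tt) = h e + 1 := fun e => by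
      rw [hθ, monodromyPerm_generator hcov hdeck, hτ]
    have h2 : ∀ k : ℤ, ∀ e : π ⁻¹' {x₀}, h ((θ ^ k) e : Tt) = h e + k := by
      intro k
      induction k with
      | zero => simp
      | succ n ih =>
        intro e
        rw [zpow_add_one, Equiv.Perm.mul_apply, ih, h1]
        push_cast; ring
      | pred n ih =>
        intro e
        have := h1 (θ⁻¹ e)
        rw [show θ (θ⁻¹ e) = e from θ.apply_symm_apply e] at this
        rw [zpow_sub_one, Equiv.Perm.mul_apply, ih, this]
        push_cast; ring
    have h3 := h2 k e
    rw [hk, hee] at h3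
    have hk0 : k = 0 := by
      have : (k : ℝ) = 0 := by linarith
      exact_mod_cast this
    rw [← hk, hk0]; simp
  have cov := AddCircle.isCoveringMap_coe (1 : ℝ)
  let η : Path (π e) x₀ := PathConnectedSpace.somePath _ _
  have lift1 : ∀ (e'' : Tt) (h0 : (η : C(I, T)) 0 = π e''), h e'' = h e →
      h (hcov.1.liftPath (η : C(I, T)) e'' h0 1) = cov.liftPath ((η.map hg).toContinuousMap) (h e)
        (by rw [hl]; exact (η.map hg).source) 1 := by
    intro e'' h0 hee
    have : (⟨h, hc⟩ : C(Tt, ℝ)).comp (hcov.1.liftPath (η : C(I, T)) e'' h0) =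
        cov.liftPath ((η.map hg).toContinuousMap) (h e)
        (by rw [hl]; exact (η.map hg).source) := by
      rw [cov.eq_liftPath_iff']
      refine ⟨funext fun t => ?_, ?_⟩
      · change ((h _ : ℝ) : UnitAddCircle) = g (η t)
        rw [hl]
        exact congr_arg g (congr_fun (hcov.1.liftPath_lifts (η : C(I, T)) e'' h0) t)
      · change h _ = _
        rw [hcov.1.liftPath_zero, hee]
    rw [← this]; rfl
  have h1 := base (hcov.1.monodromy ⟦η⟧ ⟨e, rfl⟩) (hcov.1.monodromy ⟦η⟧ ⟨e', he.symm⟩)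
    ((lift1 e _ rfl).trans (lift1 e' _ hh.symm).symm)
  exact congr_arg Subtype.val ((hcov.1.monodromy_bijective _).1 h1)

omit [MetricSpace T] [MetricSpace Tt] in
/-- The values of the lift on a fiber differ by integers. -/
lemma exists_int_of_fiber (hl : ∀ y, (h y : UnitAddCircle) = g (π y)) {e e' : Tt}
    (he : π e = π e') : ∃ k : ℤ, h e' = h e + k := by
  have h1 : (h e : UnitAddCircle) = h e' := by rw [hl, hl, he]
  obtain ⟨k, hk⟩ := (QuotientAddGroup.eq.1 h1)
  refine ⟨k, ?_⟩
  simp at hk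
  linarith

/-- A set on which the lift is bounded meets every fiber in boundedly many points. -/
lemma encard_fiber_le [PathConnectedSpace T] (hcov : CoverSetup π) (hgen : IsGenerator x₀ α₀)
    (hdeck : IsDeck π x₀ α₀ τ) (hc : Continuous h) (hg : Continuous g)
    (hl : ∀ y, (h y : UnitAddCircle) = g (π y)) (hτ : ∀ y, h (τ y) = h y + 1)
    {U : Set Tt} {n : ℕ} (hU : ∀ y ∈ U, |h y| ≤ n) (x : T) :
    (π ⁻¹' {x} ∩ U).encard ≤ (4 * n + 1 : ℕ) := by
  rcases (π ⁻¹' {x} ∩ U).eq_empty_or_nonempty with h0 | ⟨e, he, heU⟩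
  · simp [h0]
  choose! k hk using fun e' (he' : π e = π e') => exists_int_of_fiber hl he'
  have hmaps : MapsTo k (π ⁻¹' {x} ∩ U) (Icc (-(2 * n : ℤ)) (2 * n)) := by
    rintro e' ⟨he', he'U⟩
    have h1 := hk e' ((mem_singleton_iff.1 he).trans (mem_singleton_iff.1 he').symm)
    have h2 := abs_le.1 (hU e heU)
    have h3 := abs_le.1 (hU e' he'U)
    constructor
    · have : (-(2 * n) : ℝ) ≤ k e' := by linarith
      exact_mod_cast this
    · have : (k e' : ℝ) ≤ 2 * n := by linarith
      exact_mod_cast this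
  have hinj : InjOn k (π ⁻¹' {x} ∩ U) := by
    rintro y ⟨hy, -⟩ z ⟨hz, -⟩ hyz
    have h1 := hk y ((mem_singleton_iff.1 he).trans (mem_singleton_iff.1 hy).symm)
    have h2 := hk z ((mem_singleton_iff.1 he).trans (mem_singleton_iff.1 hz).symm)
    refine eq_of_lift_eq hcov hgen hdeck hc hg hl hτ
      ((mem_singleton_iff.1 hy).trans (mem_singleton_iff.1 hz).symm) ?_
    rw [h1, h2, hyz]
  refine (encard_le_encard_of_injOn hmaps hinj).trans ?_
  rw [← Finset.coe_Icc, encard_coe_eq_coe_finsetCard, Int.card_Icc]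
  norm_cast
  omega

lemma countable_fiber [PathConnectedSpace T] (hcov : CoverSetup π) (hgen : IsGenerator x₀ α₀)
    (hdeck : IsDeck π x₀ α₀ τ) (hc : Continuous h) (hg : Continuous g)
    (hl : ∀ y, (h y : UnitAddCircle) = g (π y)) (hτ : ∀ y, h (τ y) = h y + 1) (x : T) :
    (π ⁻¹' {x}).Countable := by
  have : π ⁻¹' {x} = ⋃ n : ℕ, π ⁻¹' {x} ∩ {y | |h y| ≤ n} := by
    rw [← inter_iUnion, eq_comm, inter_eq_left]
    intro y _
    obtain ⟨n, hn⟩ := exists_nat_ge |h y|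
    exact mem_iUnion.2 ⟨n, hn⟩
  rw [this]
  refine countable_iUnion fun n => Finite.countable ?_
  refine finite_of_encard_le_coe
    (encard_fiber_le hcov hgen hdeck hc hg hl hτ (U := {y | |h y| ≤ n}) (fun y hy => hy) x)

end Fibers

end

section

section PathLifting

variable {T Tt : Type*} [MetricSpace T] [MetricSpace Tt] {π : Tt → T}

lemma IsLocalIsometry.lipschitzOnWith_comp (hπ : IsLocalIsometry π) {γ : ℝ → Tt} {a b : ℝ}
    (hγ : LipschitzOnWith 1 γ (Icc a b)) : LipschitzOnWith 1 (π ∘ γ) (Icc a b) := by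
  refine lipschitzOnWith_Icc_of_locally fun t ht => ?_
  obtain ⟨ε, hε, H⟩ := hπ (γ t)
  have hd : ∀ r ∈ Icc a b, ∀ s ∈ Icc a b, dist (γ r) (γ s) ≤ |r - s| := fun r hr s hs => by
    simpa [Real.dist_eq] using hγ.dist_le_mul r hr s hs
  refine ⟨ε, hε, fun r hr s hs hr1 hrs hs1 => ?_⟩
  rw [Function.comp_apply, Function.comp_apply, H]
  · refine (hd r hr s hs).trans_eq ?_
    rw [abs_sub_comm, abs_of_nonneg (sub_nonneg.2 hrs), NNReal.coe_one, one_mul]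
  · refine (hd r hr t ht).trans_lt ?_
    rw [abs_lt]; constructor <;> linarith
  · refine (hd s hs t ht).trans_lt ?_
    rw [abs_lt]; constructor <;> linarith

/-- The projection of a path. -/
def UPath.proj (hπ : IsLocalIsometry π) (γ : UPath Tt) : UPath T where
  a := γ.a
  b := γ.b
  hab := γ.hab
  toFun := π ∘ γ.toFun
  lip := hπ.lipschitzOnWith_comp γ.lip

/-- Rectifiable paths lift to the cover. -/
lemma exists_lift_uPath (hcov : CoverSetup π) (γ : UPath T) {t₀ : ℝ}
    (ht₀ : t₀ ∈ Icc γ.a γ.b) {e : Tt} (he : π e = γ.toFun t₀) :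
    ∃ γt : UPath Tt, γt.a = γ.a ∧ γt.b = γ.b ∧ γt.toFun t₀ = e ∧
      ∀ t ∈ Icc γ.a γ.b, π (γt.toFun t) = γ.toFun t := by
  have hc : Continuous (fun t : ℝ => γ.toFun (projIcc γ.a γ.b γ.hab t)) :=
    γ.lip.continuousOn.comp_continuous (by fun_prop) fun t => (projIcc γ.a γ.b γ.hab t).2
  obtain ⟨F, ⟨hF0, hF⟩, -⟩ := hcov.1.existsUnique_continuousMap_lifts (⟨_, hc⟩ : C(ℝ, T)) t₀ e
    (by simpa [projIcc_of_mem γ.hab ht₀] using he)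
  have hF' : ∀ t ∈ Icc γ.a γ.b, π (F t) = γ.toFun t := fun t ht => by
    have := congr_fun hF t
    simpa [projIcc_of_mem γ.hab ht] using this
  refine ⟨⟨γ.a, γ.b, γ.hab, F, lipschitzOnWith_Icc_of_locally fun t ht => ?_⟩, rfl, rfl, hF0, hF'⟩
  obtain ⟨ε, hε, H⟩ := hcov.2.2.1 (F t)
  obtain ⟨δ, hδ, hball⟩ := Metric.continuous_iff.1 F.continuous t ε hε
  refine ⟨δ, hδ, fun r hr s hs hr1 hrs hs1 => ?_⟩
  have hr2 : dist r t < δ := by rw [Real.dist_eq, abs_lt]; constructor <;> linarith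
  have hs2 : dist s t < δ := by rw [Real.dist_eq, abs_lt]; constructor <;> linarith
  rw [← H _ (hball r hr2) _ (hball s hs2), hF' r hr, hF' s hs]
  refine (γ.lip.dist_le_mul r hr s hs).trans_eq ?_
  rw [Real.dist_eq, abs_sub_comm, abs_of_nonneg (sub_nonneg.2 hrs)]

end PathLifting

section Sheets

variable {T Tt : Type*} [MetricSpace T] [MetricSpace Tt] {π : Tt → T}

lemma separableSpace_of_countable_fiber [CompactSpace T] (hπ : IsOpenMap π)
    (hfib : ∀ x, (π ⁻¹' {x}).Countable) : TopologicalSpace.SeparableSpace Tt := by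
  obtain ⟨D, hDc, hD⟩ := TopologicalSpace.exists_countable_dense T
  refine ⟨⟨π ⁻¹' D, ?_, ?_⟩⟩
  · rw [← biUnion_preimage_singleton]
    exact hDc.biUnion fun x _ => hfib x
  · exact hD.preimage hπ

variable [MeasurableSpace T] [BorelSpace T] [MeasurableSpace Tt] [BorelSpace Tt]

/-- A covering map with countable fibers admits a countable partition of the total space into
Borel sets on which it is injective, with Borel inverses. -/
lemma exists_sheets [CompactSpace T] [Nonempty Tt] (hπ : IsLocalHomeomorph π)
    (hfib : ∀ x, (π ⁻¹' {x}).Countable) :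
    ∃ (A : ℕ → Set Tt) (s : ℕ → T → Tt), (∀ i, MeasurableSet (A i)) ∧
      (∀ i, Measurable (s i)) ∧ (∀ i, MeasurableSet (π '' A i)) ∧
      (∀ i, ∀ y ∈ A i, s i (π y) = y) ∧ Pairwise (Function.onFun Disjoint A) ∧ ⋃ i, A i = univ := by
  have := separableSpace_of_countable_fiber hπ.isOpenMap hfib
  have : SecondCountableTopology Tt := UniformSpace.secondCountable_of_separable Tt
  obtain ⟨y₀⟩ := ‹Nonempty Tt›
  choose e he hef using hπ
  obtain ⟨S, hSc, hS⟩ := TopologicalSpace.countable_cover_nhds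
    (f := fun x => (e x).source) fun x => (e x).open_source.mem_nhds (he x)
  have hSne : S.Nonempty := by
    rw [nonempty_iff_ne_empty]
    rintro rfl
    simp at hS
    exact absurd (mem_univ y₀) (hS ▸ notMem_empty y₀)
  obtain ⟨c, rfl⟩ := hSc.exists_eq_range hSne
  rw [biUnion_range] at hS
  classical
  let s : ℕ → T → Tt := fun i => (e (c i)).target.piecewise (e (c i)).symm fun _ => y₀
  have hsm : ∀ i, Measurable (s i) := fun i =>
    ContinuousOn.measurable_piecewise (e (c i)).continuousOn_symm continuousOn_const
      (e (c i)).open_target.measurableSet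
  have hsy : ∀ i, ∀ y ∈ (e (c i)).source, s i (π y) = y := fun i y hy => by
    have h1 : π y ∈ (e (c i)).target := by
      rw [hef (c i)]; exact (e (c i)).map_source hy
    simp only [s]
    rw [piecewise_eq_of_mem _ _ _ h1, hef (c i)]
    exact (e (c i)).left_inv hy
  have hAm : ∀ i, MeasurableSet (disjointed (fun i => (e (c i)).source) i) := fun i =>
    MeasurableSet.disjointed (fun i => (e (c i)).open_source.measurableSet) i
  refine ⟨disjointed fun i => (e (c i)).source, s, hAm, hsm, fun i => ?_, 
    fun i y hy => hsy i y (disjointed_subset (fun i => (e (c i)).source) i hy), disjoint_disjointed _,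
    iUnion_disjointed.trans hS⟩
  have : π '' disjointed (fun i => (e (c i)).source) i =
      (e (c i)).target ∩ s i ⁻¹' disjointed (fun i => (e (c i)).source) i := by
    ext x
    constructor
    · rintro ⟨y, hy, rfl⟩
      have hy' := disjointed_subset (fun i => (e (c i)).source) i hy
      refine ⟨?_, ?_⟩
      · rw [hef (c i)]; exact (e (c i)).map_source hy'
      · rw [mem_preimage, hsy i y hy']; exact hy
    · rintro ⟨h1, h2⟩
      refine ⟨s i x, h2, ?_⟩
      simp only [s]
      rw [piecewise_eq_of_mem _ _ _ h1, hef (c i)]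
      exact (e (c i)).right_inv h1
  rw [this]
  exact (e (c i)).open_target.measurableSet.inter (hsm i (hAm i))

variable {μ : Measure T} {μt : Measure Tt}

omit [BorelSpace T] [BorelSpace Tt] in
/-- A set meeting every fiber in at most `N` points covers the base at most `N` times. -/
lemma setLIntegral_comp_le (hπ : Measurable π) (hμt : IsLiftedMeasure π μ μt) {U : Set Tt}
    (hU : MeasurableSet U) {N : ℕ} (hN : ∀ x, (π ⁻¹' {x} ∩ U).encard ≤ N) {k : T → ℝ≥0∞}
    (hk : Measurable k) : ∫⁻ y in U, k (π y) ∂μt ≤ N * ∫⁻ x, k x ∂μ := by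
  have h1 : Measure.map π (μt.restrict U) ≤ (N : ℝ≥0∞) • μ := by
    refine Measure.le_iff.2 fun B hB => ?_
    rw [Measure.map_apply hπ hB, Measure.restrict_apply (hπ hB), hμt _ ((hπ hB).inter hU)]
    rw [Measure.smul_apply, smul_eq_mul, ← setLIntegral_const, ← lintegral_indicator hB]
    refine lintegral_mono fun x => ?_
    by_cases hx : x ∈ B
    · rw [indicator_of_mem hx]
      have h2 := (encard_le_encard (s := π ⁻¹' {x} ∩ (π ⁻¹' B ∩ U)) (t := π ⁻¹' {x} ∩ U)
        fun y hy => ⟨hy.1, hy.2.2⟩).trans (hN x)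
      exact (ENat.toENNReal_le.2 h2).trans_eq (ENat.toENNReal_coe N)
    · have : π ⁻¹' {x} ∩ (π ⁻¹' B ∩ U) = ∅ := by
        ext y
        simp only [mem_inter_iff, mem_preimage, mem_singleton_iff, mem_empty_iff_false, iff_false]
        rintro ⟨rfl, h, -⟩
        exact hx h
      simp [this]
  rw [← lintegral_map hk hπ, ← smul_eq_mul, ← lintegral_smul_measure]
  exact lintegral_mono' h1 fun _ => le_rfl

omit [BorelSpace T] [BorelSpace Tt] in
lemma map_restrict_sheet (hπ : Measurable π) (hμt : IsLiftedMeasure π μ μt) {A : Set Tt}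
    (hA : MeasurableSet A) (hinj : InjOn π A) (hπA : MeasurableSet (π '' A)) :
    Measure.map π (μt.restrict A) = μ.restrict (π '' A) := by
  refine Measure.ext fun B hB => ?_
  rw [Measure.map_apply hπ hB, Measure.restrict_apply (hπ hB), hμt _ ((hπ hB).inter hA),
    ← lintegral_indicator_one hB, ← lintegral_indicator hπA]
  refine lintegral_congr fun x => ?_
  by_cases hx : x ∈ π '' A ∧ x ∈ B
  · obtain ⟨⟨y, hy, rfl⟩, hB⟩ := hx
    have : π ⁻¹' {π y} ∩ (π ⁻¹' B ∩ A) = {y} := by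
      ext z
      simp only [mem_inter_iff, mem_preimage, mem_singleton_iff]
      constructor
      · rintro ⟨h1, -, h2⟩
        exact hinj h2 hy h1
      · rintro rfl
        exact ⟨rfl, hB, hy⟩
    rw [this, indicator_of_mem (mem_image_of_mem π hy), indicator_of_mem hB]
    simp
  · have : π ⁻¹' {x} ∩ (π ⁻¹' B ∩ A) = ∅ := by
      ext z
      simp only [mem_inter_iff, mem_preimage, mem_singleton_iff, mem_empty_iff_false, iff_false]
      rintro ⟨rfl, h1, h2⟩
      exact hx ⟨⟨z, h2, rfl⟩, h1⟩
    rw [this]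
    by_cases h1 : x ∈ π '' A
    · rw [indicator_of_mem h1, indicator_of_notMem fun h2 => hx ⟨h1, h2⟩]
      simp
    · rw [indicator_of_notMem h1]
      simp

/-- A Borel function on the cover is dominated by the pullback of a Borel function on the base
with no larger `p`-energy. -/
lemma exists_le_comp_lintegral_rpow_le [CompactSpace T] [Nonempty Tt] (hπ : IsLocalHomeomorph π)
    (hfib : ∀ x, (π ⁻¹' {x}).Countable) (hμt : IsLiftedMeasure π μ μt) {g : Tt → ℝ≥0∞}
    (hg : Measurable g) {p : ℝ} (hp : 0 < p) :
    ∃ G : T → ℝ≥0∞, Measurable G ∧ (∀ y, g y ≤ G (π y)) ∧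
      ∫⁻ x, G x ^ p ∂μ ≤ ∫⁻ y, g y ^ p ∂μt := by
  obtain ⟨A, s, hA, hs, hπA, hsA, hdisj, hcover⟩ := exists_sheets hπ hfib
  have hπm : Measurable π := hπ.continuous.measurable
  set G : ℕ → T → ℝ≥0∞ := fun i => (π '' A i).indicator fun x => g (s i x) with hG
  have hGm : ∀ i, Measurable (G i) := fun i => (hg.comp (hs i)).indicator (hπA i)
  refine ⟨fun x => ⨆ i, G i x, Measurable.iSup hGm, fun y => ?_, ?_⟩
  · obtain ⟨i, hi⟩ := mem_iUnion.1 (hcover.symm ▸ mem_univ y : y ∈ ⋃ i, A i)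
    refine le_iSup_of_le i ?_
    simp only [hG]
    rw [indicator_of_mem (mem_image_of_mem π hi), hsA i y hi]
  · calc ∫⁻ x, (⨆ i, G i x) ^ p ∂μ ≤ ∫⁻ x, ∑' i, G i x ^ p ∂μ := by
          refine lintegral_mono fun x => ?_
          rw [← ENNReal.orderIsoRpow_apply p hp, OrderIso.map_iSup]
          exact iSup_le fun i => ENNReal.le_tsum i
      _ = ∑' i, ∫⁻ x, G i x ^ p ∂μ := lintegral_tsum fun i => ((hGm i).pow_const p).aemeasurable
      _ = ∑' i, ∫⁻ y in A i, g y ^ p ∂μt := by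
          congr 1 with i
          have h1 : ∀ x, G i x ^ p = (π '' A i).indicator (fun x => g (s i x) ^ p) x := fun x => by
            by_cases hx : x ∈ π '' A i
            · simp only [hG, indicator_of_mem hx]
            · simp only [hG, indicator_of_notMem hx, ENNReal.zero_rpow_of_pos hp]
          simp_rw [h1]
          have hinj : InjOn π (A i) := fun y hy z hz hyz => by
            rw [← hsA i y hy, ← hsA i z hz, hyz]
          rw [lintegral_indicator (hπA i), ← map_restrict_sheet hπm hμt (hA i) hinj (hπA i),
            lintegral_map (f := fun x => g (s i x) ^ p) ((hg.comp (hs i)).pow_const p) hπm]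
          refine setLIntegral_congr_fun (hA i) fun y (hy : y ∈ A i) => ?_
          simp only [hsA i y hy]
      _ = ∫⁻ y, g y ^ p ∂μt := by
          rw [← lintegral_iUnion hA hdisj, hcover, setLIntegral_univ]

end Sheets

end

section

lemma lintegral_iSup_rpow_le {X : Type*} [MeasurableSpace X] (μ : Measure X) {g : ℕ → X → ℝ≥0∞}
    (hg : ∀ n, Measurable (g n)) {p : ℝ} (hp : 0 < p) :
    ∫⁻ x, (⨆ n, g n x) ^ p ∂μ ≤ ∑' n, ∫⁻ x, g n x ^ p ∂μ := by
  rw [← lintegral_tsum fun n => ((hg n).pow_const p).aemeasurable]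
  refine lintegral_mono fun x => ?_
  rw [← ENNReal.orderIsoRpow_apply p hp, OrderIso.map_iSup]
  exact iSup_le fun n => ENNReal.le_tsum n

section Modulus

variable {X : Type*} [PseudoMetricSpace X] [MeasurableSpace X] {μ : Measure X} {p : ℝ}
  {Γ : Set (UPath X)}

lemma pathMod_mono {ν : Measure X} {Γ' : Set (UPath X)} (hμ : ν ≤ μ) (hΓ : Γ' ⊆ Γ) :
    pathMod ν p Γ' ≤ pathMod μ p Γ :=
  le_iInf₂ fun ρ hρ => (iInf₂_le ρ ⟨hρ.1, fun γ hγ => hρ.2 γ (hΓ hγ)⟩).trans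
    (lintegral_mono' hμ fun _ => le_rfl)

lemma exists_lintegral_rpow_lt_of_pathMod_eq_zero (h : pathMod μ p Γ = 0) {ε : ℝ≥0∞}
    (hε : 0 < ε) : ∃ g : X → ℝ≥0∞, Measurable g ∧ (∀ γ ∈ Γ, 1 ≤ γ.integral g) ∧
      ∫⁻ x, g x ^ p ∂μ < ε := by
  rw [← h] at hε
  simp only [pathMod, iInf_lt_iff] at hε
  obtain ⟨g, ⟨h1, h2⟩, h3⟩ := hε
  exact ⟨g, h1, h2, h3⟩

lemma pathMod_iUnion_eq_zero {Γ : ℕ → Set (UPath X)} (hp : 0 < p)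
    (h : ∀ n, pathMod μ p (Γ n) = 0) : pathMod μ p (⋃ n, Γ n) = 0 := by
  refine le_antisymm (ENNReal.le_of_forall_pos_le_add fun ε hε _ => ?_) zero_le
  obtain ⟨δ, hδ, hδε⟩ := ENNReal.exists_pos_sum_of_countable (ENNReal.coe_pos.2 hε).ne' ℕ
  choose g hgm hgΓ hg using fun n => exists_lintegral_rpow_lt_of_pathMod_eq_zero (h n)
    (ENNReal.coe_pos.2 (hδ n))
  have hadm : ∀ γ ∈ ⋃ n, Γ n, 1 ≤ γ.integral fun x => ⨆ n, g n x := fun γ hγ => by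
    obtain ⟨n, hn⟩ := mem_iUnion.1 hγ
    exact (hgΓ n γ hn).trans (lintegral_mono fun t => le_iSup (fun n => g n (γ.toFun t)) n)
  rw [zero_add]
  exact (iInf₂_le _ ⟨Measurable.iSup hgm, hadm⟩).trans ((lintegral_iSup_rpow_le μ hgm hp).trans
    ((ENNReal.tsum_le_tsum fun n => (hg n).le).trans hδε.le))

omit [MeasurableSpace X] in
lemma UPath.integral_const_mul (γ : UPath X) {c : ℝ≥0∞} (hc : c ≠ ⊤) (g : X → ℝ≥0∞) :
    γ.integral (fun x => c * g x) = c * γ.integral g :=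
  lintegral_const_mul' _ _ hc

/-- A family of paths of zero modulus is contained in the set of paths along which a function of
arbitrarily small `L^p` norm has infinite integral. -/
lemma exists_integral_eq_top_of_pathMod_eq_zero (hp : 0 < p) (h : pathMod μ p Γ = 0) {ε : ℝ≥0}
    (hε : 0 < ε) : ∃ g : X → ℝ≥0∞, Measurable g ∧ (∀ γ ∈ Γ, γ.integral g = ⊤) ∧
      ∫⁻ x, g x ^ p ∂μ ≤ ε := by
  obtain ⟨δ, hδ, hδε⟩ := ENNReal.exists_pos_sum_of_countable (ENNReal.coe_pos.2 hε).ne' ℕ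
  have htop : ∀ n : ℕ, (n : ℝ≥0∞) + 1 ≠ ⊤ := fun n => by finiteness
  have hpos : ∀ n : ℕ, 0 < (δ n : ℝ≥0∞) / ((n : ℝ≥0∞) + 1) ^ p := fun n =>
    ENNReal.div_pos (ENNReal.coe_pos.2 (hδ n)).ne' (ENNReal.rpow_ne_top_of_nonneg hp.le (htop n))
  choose g hgm hgΓ hg using fun n : ℕ => exists_lintegral_rpow_lt_of_pathMod_eq_zero h (hpos n)
  have hgm' : ∀ n : ℕ, Measurable fun x => ((n : ℝ≥0∞) + 1) * g n x := fun n =>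
    (hgm n).const_mul _
  refine ⟨fun x => ⨆ n : ℕ, ((n : ℝ≥0∞) + 1) * g n x, Measurable.iSup hgm', fun γ hγ => ?_, ?_⟩
  · refine ENNReal.eq_top_of_forall_nnreal_le fun r => ?_
    obtain ⟨n, hn⟩ := exists_nat_ge r
    calc (r : ℝ≥0∞) ≤ ((n : ℝ≥0∞) + 1) * 1 := by
          rw [mul_one]; exact le_add_right (by exact_mod_cast hn)
      _ ≤ ((n : ℝ≥0∞) + 1) * γ.integral (g n) := by gcongr; exact hgΓ n γ hγ
      _ = γ.integral fun x => ((n : ℝ≥0∞) + 1) * g n x := (γ.integral_const_mul (htop n) _).symm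
      _ ≤ _ := lintegral_mono fun t =>
          le_iSup (fun n : ℕ => ((n : ℝ≥0∞) + 1) * g n (γ.toFun t)) n
  · refine (lintegral_iSup_rpow_le μ hgm' hp).trans
      ((ENNReal.tsum_le_tsum fun n => ?_).trans hδε.le)
    simp_rw [ENNReal.mul_rpow_of_nonneg _ _ hp.le]
    rw [lintegral_const_mul _ ((hgm n).pow_const p)]
    exact (mul_le_mul_right (hg n).le _).trans ENNReal.mul_div_le

lemma pathMod_eq_zero_of_integral_eq_top (hp : 0 < p) {g : X → ℝ≥0∞} (hg : Measurable g)
    (hfin : ∫⁻ x, g x ^ p ∂μ ≠ ⊤) (hΓ : ∀ γ ∈ Γ, γ.integral g = ⊤) : pathMod μ p Γ = 0 := by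
  have key : ∀ c : ℝ≥0, 0 < c → pathMod μ p Γ ≤ (c : ℝ≥0∞) ^ p * ∫⁻ x, g x ^ p ∂μ := by
    intro c hc
    have hadm : ∀ γ ∈ Γ, 1 ≤ γ.integral fun x => c * g x := fun γ hγ => by
      rw [UPath.integral_const_mul _ ENNReal.coe_ne_top, hΓ γ hγ,
        ENNReal.mul_top (ENNReal.coe_pos.2 hc).ne']
      exact le_top
    refine (iInf₂_le _ ⟨hg.const_mul _, hadm⟩).trans_eq ?_
    simp_rw [ENNReal.mul_rpow_of_nonneg _ _ hp.le]
    rw [lintegral_const_mul _ (hg.pow_const p)]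
  have h2 : ContinuousAt (fun c : ℝ≥0 => (c : ℝ≥0∞) ^ p * ∫⁻ x, g x ^ p ∂μ) 0 :=
    ENNReal.Tendsto.mul_const ((ENNReal.continuous_rpow_const.comp
      ENNReal.continuous_coe).tendsto 0) (Or.inr hfin)
  have hlim : Tendsto (fun c : ℝ≥0 => (c : ℝ≥0∞) ^ p * ∫⁻ x, g x ^ p ∂μ) (𝓝[>] 0) (𝓝 0) := by
    have h3 := h2.tendsto
    rw [ENNReal.coe_zero, ENNReal.zero_rpow_of_pos hp, zero_mul] at h3
    exact h3.mono_left nhdsWithin_le_nhds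
  exact le_antisymm (ge_of_tendsto hlim (eventually_mem_nhdsWithin.mono key)) zero_le

end Modulus

lemma edist_coe_unitAddCircle {x y : ℝ} (h : |x - y| ≤ 1 / 2) :
    edist (x : UnitAddCircle) y = edist x y := by
  rw [edist_dist, edist_dist, dist_eq_norm, Real.dist_eq, ← AddCircle.coe_sub,
    (AddCircle.norm_coe_eq_abs_iff (1 : ℝ) one_ne_zero).2 (by simpa using h)]

section Lift

variable {T Tt : Type*} [MetricSpace T] [MetricSpace Tt] {π : Tt → T}
  {h : Tt → ℝ} {g : T → UnitAddCircle}

/-- If the upper gradient inequality holds on all subpaths of the projection of a path, it holds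
for the lift on the path. -/
lemma edist_lift_le (hπ : IsLocalIsometry π) (hc : Continuous h)
    (hl : ∀ y, (h y : UnitAddCircle) = g (π y)) {ρ : T → ℝ≥0∞} (γ : UPath Tt)
    (H : ∀ r s, ∀ hr : (γ.proj hπ).a ≤ r, ∀ hrs : r ≤ s, ∀ hs : s ≤ (γ.proj hπ).b,
      edist (g ((γ.proj hπ).sub hr hrs hs).start) (g ((γ.proj hπ).sub hr hrs hs).finish) ≤
        ((γ.proj hπ).sub hr hrs hs).integral ρ) :
    edist (h γ.start) (h γ.finish) ≤ γ.integral (ρ ∘ π) := by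
  refine rel_of_locally (P := fun r s => edist (h (γ.toFun r)) (h (γ.toFun s)) ≤
    ∫⁻ t in Icc r s, ρ (π (γ.toFun t))) γ.hab ?_ ?_
  · intro r s t _ hrs hst _ h1 h2
    rw [← lintegral_Icc_add _ hrs hst]
    exact (edist_triangle _ _ _).trans (add_le_add h1 h2)
  · intro t ht
    have hcont : ContinuousOn (h ∘ γ.toFun) (Icc γ.a γ.b) := hc.comp_continuousOn γ.lip.continuousOn
    obtain ⟨δ, hδ, hball⟩ := Metric.continuousOn_iff.1 hcont t ht (1 / 4) (by norm_num)
    refine ⟨δ, hδ, fun r hr s hs hr1 hrs hs1 => ?_⟩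
    have h1 := hball r hr (by rw [Real.dist_eq, abs_lt]; constructor <;> linarith)
    have h2 := hball s hs (by rw [Real.dist_eq, abs_lt]; constructor <;> linarith)
    rw [← edist_coe_unitAddCircle, hl, hl]
    · exact H r s hr.1 hrs hs.2
    · rw [← Real.dist_eq]
      have := dist_triangle_right (h (γ.toFun r)) (h (γ.toFun s)) (h (γ.toFun t))
      simp only [Function.comp_apply] at h1 h2
      linarith

end Lift

section CapF

variable {T Tt : Type*} [MetricSpace T] [MeasurableSpace T] [BorelSpace T] [MetricSpace Tt]
  [MeasurableSpace Tt] [BorelSpace Tt] {π : Tt → T} {x₀ : T} {α₀ : Path x₀ x₀} {τ : Tt → Tt}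
  {μ : Measure T} {μt : Measure Tt} {p : ℝ}

lemma isWeakUpperGradient_lift [PathConnectedSpace T] (hcov : CoverSetup π)
    (hgen : IsGenerator x₀ α₀) (hdeck : IsDeck π x₀ α₀ τ) (hμt : IsLiftedMeasure π μ μt)
    (hp : 0 < p) {g : T → UnitAddCircle} (hg : Continuous g) {h : Tt → ℝ} (hc : Continuous h)
    (hl : ∀ y, (h y : UnitAddCircle) = g (π y)) (hτ : ∀ y, h (τ y) = h y + 1)
    {ρ : T → ℝ≥0∞} (hρ : IsWeakUpperGradient μ p g ρ) : IsWeakUpperGradient μt p h (ρ ∘ π) := by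
  have hπm : Measurable π := hcov.1.continuous.measurable
  obtain ⟨k, hk, hktop, hkfin⟩ := exists_integral_eq_top_of_pathMod_eq_zero hp hρ one_pos
  have hU : ∀ n : ℕ, MeasurableSet {y | |h y| ≤ n} := fun n =>
    (isClosed_le hc.abs continuous_const).measurableSet
  have hbad : ∀ γ : UPath Tt, ¬ edist (h γ.start) (h γ.finish) ≤ γ.integral (ρ ∘ π) →
      γ.integral (k ∘ π) = ⊤ := by
    intro γ hγ
    by_contra hne
    refine hγ (edist_lift_le hcov.2.2.1 hc hl γ fun r s hr hrs hs => ?_)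
    by_contra hlt
    have h1 := hktop _ hlt
    refine hne (top_le_iff.1 (h1.symm.le.trans ?_))
    exact lintegral_mono_set (Icc_subset_Icc hr hs)
  set Γ : ℕ → Set (UPath Tt) := fun n => {γ | γ.InSet {y | |h y| ≤ n} ∧
    ¬ edist (h γ.start) (h γ.finish) ≤ γ.integral (ρ ∘ π)} with hΓ
  have hΓ0 : ∀ n, pathMod μt p (Γ n) = 0 := by
    intro n
    refine pathMod_eq_zero_of_integral_eq_top hp ((hk.comp hπm).indicator (hU n)) ?_ ?_
    · have h1 : ∀ y, ({y | |h y| ≤ n}.indicator (k ∘ π) y) ^ p =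
          {y | |h y| ≤ n}.indicator (fun y => k (π y) ^ p) y := fun y => by
        by_cases hy : y ∈ {y | |h y| ≤ n}
        · simp only [indicator_of_mem hy, Function.comp_apply]
        · simp only [indicator_of_notMem hy, ENNReal.zero_rpow_of_pos hp]
      simp_rw [h1]
      rw [lintegral_indicator (hU n)]
      refine ne_top_of_le_ne_top ?_ (setLIntegral_comp_le hπm hμt (hU n)
        (encard_fiber_le hcov hgen hdeck hc hg hl hτ fun y hy => hy) (hk.pow_const p))
      exact ENNReal.mul_ne_top (ENNReal.natCast_ne_top _)
        (ne_top_of_le_ne_top ENNReal.coe_ne_top hkfin)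
    · rintro γ ⟨hγn, hγ⟩
      rw [← hbad γ hγ]
      refine setLIntegral_congr_fun measurableSet_Icc fun t (ht : t ∈ Icc γ.a γ.b) => ?_
      exact indicator_of_mem (hγn t ht) _
  refine le_antisymm ?_ zero_le
  rw [← pathMod_iUnion_eq_zero hp hΓ0]
  refine pathMod_mono le_rfl fun γ hγ => ?_
  have hcont : ContinuousOn (fun t => |h (γ.toFun t)|) (Icc γ.a γ.b) :=
    (hc.comp_continuousOn γ.lip.continuousOn).abs
  obtain ⟨M, hM⟩ := isCompact_Icc.bddAbove_image hcont
  obtain ⟨n, hn⟩ := exists_nat_ge M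
  exact mem_iUnion.2 ⟨n, fun t ht => (hM (mem_image_of_mem _ ht)).trans hn, hγ⟩

lemma memNloc_lift [PathConnectedSpace T] [IsFiniteMeasure μ] (hcov : CoverSetup π)
    (hgen : IsGenerator x₀ α₀) (hdeck : IsDeck π x₀ α₀ τ) (hμt : IsLiftedMeasure π μ μt)
    (hp : 0 < p) {g : T → UnitAddCircle} (hg : Continuous g) {h : Tt → ℝ} (hc : Continuous h)
    (hl : ∀ y, (h y : UnitAddCircle) = g (π y)) (hτ : ∀ y, h (τ y) = h y + 1)
    {ρ : T → ℝ≥0∞} (hρm : Measurable ρ) (hρ : IsWeakUpperGradient μ p g ρ)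
    (hfin : ∫⁻ x, ρ x ^ p ∂μ ≠ ⊤) : MemNloc μt p h := by
  intro U hUo hUc
  have hπm : Measurable π := hcov.1.continuous.measurable
  obtain ⟨M, hM⟩ := hUc.bddAbove_image (f := fun y => |h y|) hc.abs.continuousOn
  obtain ⟨n, hn⟩ := exists_nat_ge M
  have hU : ∀ y ∈ U, |h y| ≤ n := fun y hy =>
    (hM (mem_image_of_mem _ (subset_closure hy))).trans hn
  have hfib := encard_fiber_le hcov hgen hdeck hc hg hl hτ hU
  refine ⟨?_, ρ ∘ π, hρm.comp hπm, ?_, ?_⟩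
  · have h1 := setLIntegral_comp_le hπm hμt hUo.measurableSet hfib
      (measurable_const (a := (n : ℝ≥0∞) ^ p))
    refine (setLIntegral_mono measurable_const fun y hy => ?_).trans_lt (h1.trans_lt ?_)
    · exact ENNReal.rpow_le_rpow ((ENNReal.ofReal_le_ofReal (hU y hy)).trans_eq
        (ENNReal.ofReal_natCast n)) hp.le
    · rw [lintegral_const]
      exact ENNReal.mul_lt_top (ENNReal.natCast_lt_top _)
        (ENNReal.mul_lt_top (ENNReal.rpow_lt_top_of_nonneg hp.le (ENNReal.natCast_ne_top _))
          (measure_lt_top _ _))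
  · exact le_antisymm ((pathMod_mono Measure.restrict_le_self fun γ hγ => hγ.2).trans_eq
      (isWeakUpperGradient_lift hcov hgen hdeck hμt hp hg hc hl hτ hρ)) zero_le
  · exact (setLIntegral_comp_le hπm hμt hUo.measurableSet hfib (hρm.pow_const p)).trans_lt
      (ENNReal.mul_lt_top (ENNReal.natCast_lt_top _) hfin.lt_top)

lemma capF_le_cap [PathConnectedSpace T] [LocallyPathConnectedSpace T] [IsFiniteMeasure μ]
    (hcov : CoverSetup π) (hgen : IsGenerator x₀ α₀) (hdeck : IsDeck π x₀ α₀ τ)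
    (hμt : IsLiftedMeasure π μ μt) (hp : 0 < p) : capF μ π τ μt p ≤ cap μ p x₀ α₀ := by
  refine le_iInf₂ fun g hg => le_iInf₂ fun ρ hρ => ?_
  by_cases hfin : ∫⁻ x, ρ x ^ p ∂μ = ⊤
  · rw [hfin]; exact le_top
  obtain ⟨h, hc, hl, hτ⟩ := exists_lift_of_hasDegree_one hcov hdeck hg.2
  refine iInf₂_le ρ ⟨hρ.1, h,
    memNloc_lift hcov hgen hdeck hμt hp hg.2.1 hc hl hτ hρ.1 hρ.2 hfin,
    Eventually.of_forall fun y => by rw [hτ]; ring,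
    isWeakUpperGradient_lift hcov hgen hdeck hμt hp hg.2.1 hc hl hτ hρ.2⟩

end CapF

end

section

lemma continuousOn_of_edist_le_lintegral {H : ℝ → ℝ} {r : ℝ → ℝ≥0∞} {a b : ℝ}
    (hfin : ∫⁻ t in Icc a b, r t ≠ ⊤)
    (hH : ∀ s t, a ≤ s → s ≤ t → t ≤ b → edist (H s) (H t) ≤ ∫⁻ x in Icc s t, r x) :
    ContinuousOn H (Icc a b) := by
  refine EMetric.continuousOn_iff.2 fun t ht ε hε => ?_
  obtain ⟨δ, hδ, hsmall⟩ := exists_pos_setLIntegral_lt_of_measure_lt hfin hε.ne'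
  refine ⟨δ, hδ, fun s hs hst => ?_⟩
  have key : ∀ x y, x ∈ Icc a b → y ∈ Icc a b → x ≤ y → edist x y < δ →
      edist (H x) (H y) < ε := by
    intro x y hx hy hxy hd
    have hsub : Icc x y ⊆ Icc a b := Icc_subset_Icc hx.1 hy.2
    refine (hH x y hx.1 hxy hy.2).trans_lt ?_
    have h1 := hsmall (Icc x y) (by
      refine (Measure.restrict_apply_le _ _).trans_lt ?_
      rwa [Real.volume_Icc, ← abs_of_nonneg (sub_nonneg.2 hxy), ← Real.dist_eq, ← edist_dist,
        edist_comm])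
    rwa [Measure.restrict_restrict_of_subset hsub] at h1
  rcases le_total s t with h | h
  · exact key s t hs ht h hst
  · rw [edist_comm]
    exact key t s ht hs h (by rwa [edist_comm])

section

variable {T Tt : Type*} [MetricSpace T] [MetricSpace Tt] {x₀ : T} {α₀ : Path x₀ x₀} {π : Tt → T}
  {τ : Tt → Tt} {h f : Tt → ℝ} {g : T → UnitAddCircle}

lemma IsDeck.isLocalIsometry (hπ : IsLocalIsometry π) (hdeck : IsDeck π x₀ α₀ τ) :
    IsLocalIsometry τ := by
  intro x
  obtain ⟨ε₁, h1, H1⟩ := hπ x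
  obtain ⟨ε₂, h2, H2⟩ := hπ (τ x)
  obtain ⟨δ, hδ, Hδ⟩ := Metric.continuous_iff.1 hdeck.1 x ε₂ h2
  refine ⟨min ε₁ δ, lt_min h1 hδ, fun y hy z hz => ?_⟩
  have hy' := lt_min_iff.1 (mem_ball.1 hy)
  have hz' := lt_min_iff.1 (mem_ball.1 hz)
  rw [← H2 (τ y) (Hδ y hy'.2) (τ z) (Hδ z hz'.2), hdeck.2.1, hdeck.2.1, H1 y hy'.1 z hz'.1]

/-- Fibers are orbits of the deck transformation; hence a function which the deck transformation
raises by one differs from the lift of a degree one map by a constant on every fiber. -/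
lemma sub_lift_eq_of_fiber [PathConnectedSpace T] (hcov : CoverSetup π) (hgen : IsGenerator x₀ α₀)
    (hdeck : IsDeck π x₀ α₀ τ) (hc : Continuous h) (hg : Continuous g)
    (hl : ∀ y, (h y : UnitAddCircle) = g (π y)) (hτ : ∀ y, h (τ y) = h y + 1) {x : T}
    (hf : ∀ y, π y = x → f (τ y) = f y + 1) {e e' : Tt} (he : π e = x) (he' : π e' = x) :
    f e - h e = f e' - h e' := by
  have key : ∀ (n : ℕ) (e e' : Tt), π e = x → π e' = x → h e' = h e + n →
      f e - h e = f e' - h e' := by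
    intro n e e' he he' hn
    have hit : ∀ n : ℕ, π (τ^[n] e) = x ∧ h (τ^[n] e) = h e + n ∧ f (τ^[n] e) = f e + n := by
      intro n
      induction n with
      | zero => simp [he]
      | succ n ih =>
        rw [Function.iterate_succ_apply', hdeck.2.1, hτ, hf _ ih.1, ih.2.1, ih.2.2]
        push_cast
        exact ⟨ih.1, by ring, by ring⟩
    obtain ⟨h1, h2, h3⟩ := hit n
    have : τ^[n] e = e' :=
      eq_of_lift_eq hcov hgen hdeck hc hg hl hτ (h1.trans he'.symm) (h2.trans hn.symm)
    rw [← this, h2, h3]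
    ring
  obtain ⟨k, hk⟩ := exists_int_of_fiber hl (he.trans he'.symm)
  obtain ⟨n, rfl | rfl⟩ := Int.eq_nat_or_neg k
  · exact key n e e' he he' (by simpa using hk)
  · refine (key n e' e he' he ?_).symm
    push_cast at hk
    linarith

/-- A lift of an `L`-Lipschitz map is `L`-Lipschitz along paths. -/
lemma edist_lift_sub_le (hπ : IsLocalIsometry π) (hc : Continuous h)
    (hl : ∀ y, (h y : UnitAddCircle) = g (π y)) {L : ℝ≥0} (hL : LipschitzWith L g) (γ : UPath Tt)
    {r s : ℝ} (hr : γ.a ≤ r) (hrs : r ≤ s) (hs : s ≤ γ.b) :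
    edist (h (γ.toFun r)) (h (γ.toFun s)) ≤ L * ENNReal.ofReal (s - r) := by
  have h1 := edist_lift_le hπ hc hl (ρ := fun _ => L) (γ.sub hr hrs hs) (by
    intro r' s' hr' hrs' hs'
    have hd := (((γ.sub hr hrs hs).proj hπ).sub hr' hrs' hs').lip (left_mem_Icc.2 hrs')
      (right_mem_Icc.2 hrs')
    refine (hL _ _).trans ?_
    rw [UPath.integral, setLIntegral_const, Real.volume_Icc]
    gcongr
    refine hd.trans_eq ?_
    rw [ENNReal.coe_one, one_mul, edist_comm, edist_dist, Real.dist_eq]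
    exact congrArg _ (abs_of_nonneg (sub_nonneg.2 hrs')))
  refine h1.trans_eq ?_
  rw [UPath.integral]
  simp only [Function.comp_def]
  rw [setLIntegral_const, Real.volume_Icc]
  rfl

variable [MeasurableSpace T] [BorelSpace T]

/-- If `f` is raised by one almost everywhere along a path, it is so everywhere. -/
lemma deck_apply_eq_along (hπ : IsLocalIsometry π) (hdeck : IsDeck π x₀ α₀ τ) {ρ : T → ℝ≥0∞}
    (hρm : Measurable ρ) (hf : IsUpperGradient f (ρ ∘ π))
    (hfτ : ∀ y, ρ (π y) ≠ ⊤ → f (τ y) = f y + 1) (γ : UPath Tt) (hab : γ.a < γ.b)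
    (hfin : γ.integral (ρ ∘ π) ≠ ⊤) {t : ℝ} (ht : t ∈ Icc γ.a γ.b) :
    f (τ (γ.toFun t)) = f (γ.toFun t) + 1 := by
  have h1 : ContinuousOn (fun t => f (γ.toFun t)) (Icc γ.a γ.b) :=
    continuousOn_of_edist_le_lintegral hfin fun s t hs hst ht => hf (γ.sub hs hst ht)
  have h2 : ContinuousOn (fun t => f (τ (γ.toFun t))) (Icc γ.a γ.b) := by
    refine continuousOn_of_edist_le_lintegral hfin fun s t hs hst ht => ?_
    refine (hf ((γ.proj (hdeck.isLocalIsometry hπ)).sub hs hst ht)).trans_eq ?_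
    exact lintegral_congr fun x => by
      simp only [Function.comp_apply, UPath.proj, UPath.sub, hdeck.2.1]
  have hm : AEMeasurable (fun t => ρ (π (γ.toFun t))) (volume.restrict (Icc γ.a γ.b)) :=
    hρm.comp_aemeasurable ((hπ.lipschitzOnWith_comp γ.lip).continuousOn.aemeasurable
      measurableSet_Icc)
  have hae : (fun t => f (τ (γ.toFun t))) =ᵐ[volume.restrict (Icc γ.a γ.b)]
      fun t => f (γ.toFun t) + 1 := by
    filter_upwards [ae_lt_top' hm hfin] with t ht using hfτ _ ht.ne
  exact Measure.eqOn_Icc_of_ae_eq volume hab.ne hae h2 (h1.add continuousOn_const) ht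

/-- A function on the cover which is raised by one by the deck transformation descends, after
subtraction of the lift of a degree one map, to a function defined on all paths along which the
upper gradient is integrable. -/
lemma exists_descent [PathConnectedSpace T] (hcov : CoverSetup π) (hgen : IsGenerator x₀ α₀)
    (hdeck : IsDeck π x₀ α₀ τ) (hc : Continuous h) (hg : Continuous g)
    (hl : ∀ y, (h y : UnitAddCircle) = g (π y)) (hτ : ∀ y, h (τ y) = h y + 1) {ρ : T → ℝ≥0∞}
    (hρm : Measurable ρ) (hf : IsUpperGradient f (ρ ∘ π))
    (hfτ : ∀ y, ρ (π y) ≠ ⊤ → f (τ y) = f y + 1) :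
    ∃ v : T → ℝ, ∀ γ : UPath Tt, γ.a < γ.b → γ.integral (ρ ∘ π) ≠ ⊤ → ∀ t ∈ Icc γ.a γ.b,
      v (π (γ.toFun t)) = f (γ.toFun t) - h (γ.toFun t) := by
  choose s hs using hcov.2.1
  refine ⟨fun x => f (s x) - h (s x), fun γ hab hfin t ht => ?_⟩
  refine sub_lift_eq_of_fiber hcov hgen hdeck hc hg hl hτ (x := π (γ.toFun t)) ?_ (hs _) rfl
  intro y hy
  obtain ⟨γ', ha, hb, hγ't, hγ'⟩ : ∃ γ' : UPath Tt, γ'.a = γ.a ∧ γ'.b = γ.b ∧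
      γ'.toFun t = y ∧ ∀ r ∈ Icc γ.a γ.b, π (γ'.toFun r) = π (γ.toFun r) := by
    exact exists_lift_uPath hcov (γ.proj hcov.2.2.1) ht hy
  rw [← hγ't]
  refine deck_apply_eq_along hcov.2.2.1 hdeck hρm hf hfτ γ' (by rwa [ha, hb]) ?_ (by rwa [ha, hb])
  have : γ'.integral (ρ ∘ π) = γ.integral (ρ ∘ π) := by
    rw [UPath.integral, UPath.integral, ha, hb]
    exact setLIntegral_congr_fun measurableSet_Icc fun r (hr : r ∈ Icc γ.a γ.b) => by
      simp only [Function.comp_apply, hγ' r hr]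
  rwa [this]

end

end

section

lemma edist_coe_unitAddCircle_le (x y : ℝ) : edist (x : UnitAddCircle) y ≤ edist x y := by
  rw [edist_dist, edist_dist, dist_eq_norm, dist_eq_norm, ← AddCircle.coe_sub]
  exact ENNReal.ofReal_le_ofReal QuotientAddGroup.norm_mk_le_norm

section

variable {T Tt : Type*} [MetricSpace T] [MetricSpace Tt] {x₀ : T} {α₀ : Path x₀ x₀} {π : Tt → T}
  {τ : Tt → Tt} {h f : Tt → ℝ} {g : T → UnitAddCircle} {v w : T → ℝ} {L M : ℝ≥0} {ρ : T → ℝ≥0∞}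

lemma edist_descent_le (hcov : CoverSetup π) (hc : Continuous h)
    (hl : ∀ y, (h y : UnitAddCircle) = g (π y)) (hL : LipschitzWith L g)
    (hf : IsUpperGradient f (ρ ∘ π))
    (hv : ∀ γ : UPath Tt, γ.a < γ.b → γ.integral (ρ ∘ π) ≠ ⊤ → ∀ t ∈ Icc γ.a γ.b,
      v (π (γ.toFun t)) = f (γ.toFun t) - h (γ.toFun t)) (γ : UPath T) (hfin : γ.integral ρ ≠ ⊤) :
    edist (v γ.start) (v γ.finish) ≤ γ.integral (fun x => ρ x + L) := by
  rcases γ.hab.eq_or_lt with hab | hab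
  · simp [UPath.start, UPath.finish, hab]
  obtain ⟨e, he⟩ := hcov.2.1 γ.start
  obtain ⟨γt, ha, hb, -, hγt⟩ := exists_lift_uPath hcov γ (left_mem_Icc.2 γ.hab) he
  have hint : γt.integral (ρ ∘ π) = γ.integral ρ := by
    rw [UPath.integral, UPath.integral, ha, hb]
    exact setLIntegral_congr_fun measurableSet_Icc fun r (hr : r ∈ Icc γ.a γ.b) => by
      simp only [Function.comp_apply, hγt r hr]
  have hval := hv γt (by rwa [ha, hb]) (by rwa [hint])
  rw [ha, hb] at hval
  have hs := hval γ.a (left_mem_Icc.2 γ.hab)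
  have ht := hval γ.b (right_mem_Icc.2 γ.hab)
  rw [hγt _ (left_mem_Icc.2 γ.hab)] at hs
  rw [hγt _ (right_mem_Icc.2 γ.hab)] at ht
  have h1 : edist (f (γt.toFun γ.a)) (f (γt.toFun γ.b)) ≤ γ.integral ρ := by
    rw [← hint, ← ha, ← hb]
    exact hf γt
  have h2 : edist (h (γt.toFun γ.a)) (h (γt.toFun γ.b)) ≤ L * ENNReal.ofReal (γ.b - γ.a) :=
    edist_lift_sub_le hcov.2.2.1 hc hl hL γt ha.le γ.hab hb.ge
  have h3 : γ.integral (fun x => ρ x + L) = γ.integral ρ + L * ENNReal.ofReal (γ.b - γ.a) := by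
    rw [UPath.integral, lintegral_add_right _ measurable_const, setLIntegral_const,
      Real.volume_Icc]
    rfl
  rw [h3, UPath.start, UPath.finish, hs, ht]
  refine le_trans ?_ (add_le_add h1 h2)
  rw [sub_eq_add_neg, sub_eq_add_neg]
  refine (edist_add_add_le _ _ _ _).trans_eq ?_
  rw [edist_neg_neg]

variable [MeasurableSpace T] [BorelSpace T]

lemma edist_add_coe_le_integral_piecewise (hcov : CoverSetup π) (hc : Continuous h)
    (hl : ∀ y, (h y : UnitAddCircle) = g (π y)) (hL : LipschitzWith L g) (hρm : Measurable ρ)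
    (hf : IsUpperGradient f (ρ ∘ π))
    (hv : ∀ γ : UPath Tt, γ.a < γ.b → γ.integral (ρ ∘ π) ≠ ⊤ → ∀ t ∈ Icc γ.a γ.b,
      v (π (γ.toFun t)) = f (γ.toFun t) - h (γ.toFun t)) (hw : LipschitzWith M w)
    {W : Set T} [DecidablePred (· ∈ W)] (hwv : ∀ x ∉ W, w x = v x) (γ : UPath T)
    (hfin : γ.integral ρ ≠ ⊤) :
    edist (g γ.start + (w γ.start : UnitAddCircle)) (g γ.finish + (w γ.finish : UnitAddCircle)) ≤
      γ.integral (W.piecewise (fun _ => ((L + M : ℝ≥0) : ℝ≥0∞)) ρ) := by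
  rcases γ.hab.eq_or_lt with hab | hab
  · simp [UPath.start, UPath.finish, hab]
  obtain ⟨e, he⟩ := hcov.2.1 γ.start
  obtain ⟨γt, ha, hb, -, hγt⟩ := exists_lift_uPath hcov γ (left_mem_Icc.2 γ.hab) he
  have hint : ∀ s t, γ.a ≤ s → t ≤ γ.b →
      ∫⁻ r in Icc s t, (ρ ∘ π) (γt.toFun r) = ∫⁻ r in Icc s t, ρ (γ.toFun r) := by
    intro s t hs ht
    exact setLIntegral_congr_fun measurableSet_Icc fun r (hr : r ∈ Icc s t) => by
      simp only [Function.comp_apply, hγt r (Icc_subset_Icc hs ht hr)]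
  have hval := hv γt (by rwa [ha, hb]) (by
    rw [UPath.integral, ha, hb, hint _ _ le_rfl le_rfl]; exact hfin)
  rw [ha, hb] at hval
  set k : ℝ → ℝ := fun t => h (γt.toFun t) + w (γ.toFun t) with hk
  have hkg : ∀ t ∈ Icc γ.a γ.b,
      (k t : UnitAddCircle) = g (γ.toFun t) + (w (γ.toFun t) : UnitAddCircle) := fun t ht => by
    rw [hk, AddCircle.coe_add, hl, hγt t ht]
  have hhL : LipschitzOnWith L (fun t => h (γt.toFun t)) (Icc γ.a γ.b) := by
    have key : ∀ s ∈ Icc γ.a γ.b, ∀ t ∈ Icc γ.a γ.b, s ≤ t →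
        edist (h (γt.toFun s)) (h (γt.toFun t)) ≤ L * edist s t := by
      intro s hs t ht hst
      refine (edist_lift_sub_le hcov.2.2.1 hc hl hL γt (ha.trans_le hs.1) hst
        (ht.2.trans_eq hb.symm)).trans_eq ?_
      rw [edist_comm s t, edist_dist, Real.dist_eq, abs_of_nonneg (sub_nonneg.2 hst)]
    intro s hs t ht
    rcases le_total s t with hst | hst
    · exact key s hs t ht hst
    · rw [edist_comm, edist_comm s t]
      exact key t ht s hs hst
  have hkL : LipschitzOnWith (L + M) k (Icc γ.a γ.b) := by
    have h1 : LipschitzOnWith (M * 1) (w ∘ γ.toFun) (Icc γ.a γ.b) :=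
      hw.comp_lipschitzOnWith γ.lip
    rw [mul_one] at h1
    exact hhL.add h1
  rw [UPath.start, UPath.finish, ← hkg _ (left_mem_Icc.2 γ.hab), ← hkg _ (right_mem_Icc.2 γ.hab)]
  refine (edist_coe_unitAddCircle_le _ _).trans ?_
  rw [edist_comm, edist_dist, Real.dist_eq]
  refine ofReal_abs_sub_le_lintegral_of_eqOn (H := fun t => f (γt.toFun t))
    (r := fun t => ρ (γ.toFun t)) (E := {t | γ.toFun t ∉ W}) γ.hab hkL ?_ hfin ?_ ?_ ?_ ?_
  · exact hρm.comp_aemeasurable (γ.lip.continuousOn.aemeasurable measurableSet_Icc)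
  · intro s t hs hst ht
    rw [← Real.dist_eq, ← edist_dist, edist_comm, ← hint s t hs ht]
    exact hf (γt.sub (ha.trans_le hs) hst (ht.trans_eq hb.symm))
  · rintro t ⟨htW, ht⟩
    have h1 := hval t ht
    rw [hγt t ht] at h1
    simp only [hk]
    rw [hwv _ htW, h1]
    ring
  · rintro t ⟨htW, ht⟩
    rw [piecewise_eq_of_notMem _ _ _ htW]
  · intro t ht htW
    rw [piecewise_eq_of_mem _ _ _ (not_not.1 htW)]

omit [MeasurableSpace T] [BorelSpace T] in
lemma hasDegree_one_add_coe (hcov : CoverSetup π) (hdeck : IsDeck π x₀ α₀ τ) (hc : Continuous h)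
    (hg : Continuous g) (hl : ∀ y, (h y : UnitAddCircle) = g (π y))
    (hτ : ∀ y, h (τ y) = h y + 1) (hw : Continuous w) :
    HasDegree x₀ α₀ (fun x => g x + (w x : UnitAddCircle)) 1 := by
  refine hasDegree_one_of_exists_lift
    (hg.add ((AddCircle.continuous_mk' 1).comp hw)) fun x γ hγ => ?_
  obtain ⟨e, he⟩ := hcov.2.1 x
  have h0 : γ.toContinuousMap 0 = π e := by simp [he]
  set γt := hcov.1.liftPath γ.toContinuousMap e h0 with hγt
  have hlift : ∀ t, π (γt t) = γ t := fun t => congr_fun (hcov.1.liftPath_lifts _ _ h0) t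
  refine ⟨⟨fun t => h (γt t) + w (γ t), by fun_prop⟩, fun t => ?_, ?_⟩
  · simp [hl, hlift]
  · have := hdeck.2.2 x γ hγ γt hlift
    simp only [ContinuousMap.coe_mk, ← this, hτ, γ.source, γ.target]
    ring

end

end

section

section

variable {T Tt : Type*} [MetricSpace T] [MetricSpace Tt] {x₀ : T} {α₀ : Path x₀ x₀} {π : Tt → T}
  {τ : Tt → Tt} {f : Tt → ℝ} {ρ : T → ℝ≥0∞} [MeasurableSpace T] [BorelSpace T] [CompactSpace T]
  {μ : Measure T} [IsFiniteMeasure μ] {p : ℝ}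

open scoped Classical in
lemma cap_le_lintegral_of_lowerSemicontinuous [PathConnectedSpace T] [LocallyPathConnectedSpace T]
    {C : ℝ≥0} (hC : ∀ (x : T) (r : ℝ), 0 < r → μ (ball x (2 * r)) ≤ C * μ (ball x r))
    {CP lP : ℝ} (hP : SupportsPoincare μ CP lP) (hcov : CoverSetup π) (hgen : IsGenerator x₀ α₀)
    (hdeck : IsDeck π x₀ α₀ τ) (hp : 1 < p) {g : T → UnitAddCircle} (hg : DegOneLip x₀ α₀ g)
    (hρ : LowerSemicontinuous ρ) (hfin : ∫⁻ x, ρ x ^ p ∂μ ≠ ⊤) (hf : IsUpperGradient f (ρ ∘ π))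
    (hfτ : ∀ y, ρ (π y) ≠ ⊤ → f (τ y) = f y + 1) :
    cap μ p x₀ α₀ ≤ ∫⁻ x, ρ x ^ p ∂μ := by
  have hp0 : 0 < p := by linarith
  obtain ⟨⟨L, hL⟩, hg1⟩ := hg
  obtain ⟨h, hc, hl, hτ⟩ := exists_lift_of_hasDegree_one hcov hdeck hg1
  obtain ⟨v, hv⟩ := exists_descent hcov hgen hdeck hc hL.continuous hl hτ hρ.measurable hf hfτ
  obtain ⟨K, hK⟩ := exists_uPath_integral_le hC hP
  set ρ' : T → ℝ≥0∞ := fun x => ρ x + ((L + 1 : ℝ≥0) : ℝ≥0∞) with hρ'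
  have hρ'lsc : LowerSemicontinuous ρ' := hρ.add lowerSemicontinuous_const
  have hρ'fin : ∫⁻ x, ρ' x ^ p ∂μ ≠ ⊤ := by
    refine (ENNReal.lintegral_rpow_add_lt_top_of_lintegral_rpow_lt_top hρ.measurable.aemeasurable
      hfin.lt_top (g := fun _ => ((L + 1 : ℝ≥0) : ℝ≥0∞)) ?_ hp.le).ne
    rw [lintegral_const]
    exact ENNReal.mul_lt_top (ENNReal.rpow_lt_top_of_nonneg hp0.le ENNReal.coe_ne_top)
      (measure_lt_top _ _)
  have hlip : ∀ n : ℕ, LipschitzOnWith (K * n) v (badSet μ ρ' n)ᶜ := by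
    intro n x hx y hy
    obtain ⟨γ, rfl, rfl, hγ⟩ := hK ρ' hρ'lsc (fun x => le_add_left (by simp)) n x y
      (by simpa using hx) (by simpa using hy)
    have hle : ∀ x, ρ x + (L : ℝ≥0∞) ≤ ρ' x := fun x => by
      rw [hρ', ENNReal.coe_add]
      exact add_le_add le_rfl le_self_add
    have hγfin : γ.integral ρ' ≠ ⊤ := ne_top_of_le_ne_top
      (ENNReal.mul_ne_top (by finiteness) (edist_ne_top _ _)) hγ
    refine (edist_descent_le hcov hc hl hL hf hv γ (ne_top_of_le_ne_top hγfin
      (lintegral_mono fun t => le_self_add))).trans ((lintegral_mono fun t => hle _).trans ?_)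
    rw [ENNReal.coe_mul]
    exact hγ
  have hbound : ∀ n : ℕ, cap μ p x₀ α₀ ≤
      (∫⁻ x, ρ x ^ p ∂μ) + ((L + K * n : ℝ≥0) : ℝ≥0∞) ^ p * μ (badSet μ ρ' n) := by
    intro n
    obtain ⟨w, hw, hwv⟩ := (hlip n).extend_real
    set W := toMeasurable μ (badSet μ ρ' n) with hW
    have hwW : ∀ x ∉ W, w x = v x := fun x hx =>
      (hwv fun hx' => hx (subset_toMeasurable _ _ hx')).symm
    set θ : T → ℝ≥0∞ := W.piecewise (fun _ => ((L + K * n : ℝ≥0) : ℝ≥0∞)) ρ with hθ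
    have hθm : Measurable θ :=
      Measurable.piecewise (measurableSet_toMeasurable _ _) measurable_const hρ.measurable
    have hlipg : LipschitzWith (L + K * n) fun x => g x + (w x : UnitAddCircle) := by
      refine hL.add fun x y => ?_
      exact (edist_coe_unitAddCircle_le _ _).trans (hw x y)
    have hug : IsWeakUpperGradient μ p (fun x => g x + (w x : UnitAddCircle)) θ := by
      refine pathMod_eq_zero_of_integral_eq_top hp0 hρ.measurable hfin fun γ hγ => ?_
      by_contra hne
      exact hγ (edist_add_coe_le_integral_piecewise hcov hc hl hL hρ.measurable hf hv hw hwW γ hne)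
    refine (iInf₂_le _ ⟨⟨_, hlipg⟩, hasDegree_one_add_coe hcov hdeck hc hL.continuous hl hτ
      hw.continuous⟩).trans ((iInf₂_le θ ⟨hθm, hug⟩).trans ?_)
    have hle : ∀ x, θ x ^ p ≤
        ρ x ^ p + W.indicator (fun _ => ((L + K * n : ℝ≥0) : ℝ≥0∞) ^ p) x := by
      intro x
      by_cases hx : x ∈ W
      · rw [hθ, piecewise_eq_of_mem _ _ _ hx, indicator_of_mem hx]
        exact le_add_self
      · rw [hθ, piecewise_eq_of_notMem _ _ _ hx]
        exact le_self_add
    refine (lintegral_mono hle).trans_eq ?_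
    rw [lintegral_add_left (hρ.measurable.pow_const p),
      lintegral_indicator_const (measurableSet_toMeasurable _ _), measure_toMeasurable]
  have hlim : Tendsto (fun n : ℕ => (∫⁻ x, ρ x ^ p ∂μ) +
      ((L + K : ℝ≥0) : ℝ≥0∞) ^ p * ((n : ℝ≥0∞) ^ p * μ (badSet μ ρ' n))) atTop
      (𝓝 ((∫⁻ x, ρ x ^ p ∂μ) + ((L + K : ℝ≥0) : ℝ≥0∞) ^ p * 0)) :=
    tendsto_const_nhds.add (ENNReal.Tendsto.const_mul
      (tendsto_rpow_mul_measure_badSet hC hρ'lsc.measurable hp hρ'fin)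
      (Or.inr (ENNReal.rpow_ne_top_of_nonneg hp0.le ENNReal.coe_ne_top)))
  rw [mul_zero, add_zero] at hlim
  refine ge_of_tendsto hlim ((eventually_ge_atTop 1).mono fun n hn => (hbound n).trans ?_)
  rw [← mul_assoc, ← ENNReal.mul_rpow_of_nonneg _ _ hp0.le]
  gcongr
  have h1 : (1 : ℝ≥0) ≤ n := by exact_mod_cast hn
  have h2 : L + K * n ≤ (L + K) * n := by
    rw [add_mul]
    exact add_le_add (le_mul_of_one_le_right' h1) le_rfl
  exact_mod_cast h2

variable [MeasurableSpace Tt] [BorelSpace Tt] {μt : Measure Tt}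

/-- A weak upper gradient can be replaced by a lower semicontinuous genuine upper gradient at the
cost of an arbitrarily small amount of energy. -/
lemma exists_lowerSemicontinuous_isUpperGradient [Nonempty Tt] (hπ : IsLocalHomeomorph π)
    (hfib : ∀ x, (π ⁻¹' {x}).Countable) (hμt : IsLiftedMeasure π μ μt) (hp : 1 < p)
    (hρ : Measurable ρ) (hfτ : ∀ᵐ y ∂μt, f (τ y) - f y = 1)
    (hf : IsWeakUpperGradient μt p f (ρ ∘ π)) {C : ℝ≥0∞} (hC : ∫⁻ x, ρ x ^ p ∂μ < C) :
    ∃ ρ' : T → ℝ≥0∞, LowerSemicontinuous ρ' ∧ ∫⁻ x, ρ' x ^ p ∂μ ≤ C ∧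
      IsUpperGradient f (ρ' ∘ π) ∧ ∀ y, ρ' (π y) ≠ ⊤ → f (τ y) = f y + 1 := by
  have hp0 : 0 < p := by linarith
  obtain ⟨C', hC1, hC2⟩ := exists_between hC
  have hlim : ContinuousAt (fun ε : ℝ≥0 =>
      ((∫⁻ x, ρ x ^ p ∂μ) ^ (1 / p) + (ε : ℝ≥0∞) ^ (1 / p)) ^ p) 0 := by
    have h1 : Continuous fun ε : ℝ≥0 => (ε : ℝ≥0∞) ^ (1 / p) :=
      ENNReal.continuous_rpow_const.comp ENNReal.continuous_coe
    exact (ENNReal.continuous_rpow_const.comp (continuous_const.add h1)).continuousAt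
  have hlim' : ∀ᶠ ε : ℝ≥0 in 𝓝[>] 0,
      ((∫⁻ x, ρ x ^ p ∂μ) ^ (1 / p) + (ε : ℝ≥0∞) ^ (1 / p)) ^ p < C' := by
    refine (hlim.tendsto.mono_left nhdsWithin_le_nhds).eventually_lt_const ?_
    rwa [ENNReal.coe_zero, ENNReal.zero_rpow_of_pos (by positivity), add_zero, ← ENNReal.rpow_mul,
      one_div_mul_cancel hp0.ne', ENNReal.rpow_one]
  obtain ⟨ε, hεC, hε⟩ := (hlim'.and eventually_mem_nhdsWithin).exists
  obtain ⟨k, hk, hktop, hkε⟩ := exists_integral_eq_top_of_pathMod_eq_zero hp0 hf hε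
  set N := toMeasurable μt {y | ¬ f (τ y) - f y = 1} with hN
  have hN0 : μt N = 0 := by rw [hN, measure_toMeasurable]; exact hfτ
  have hNm : MeasurableSet N := measurableSet_toMeasurable _ _
  set k' : Tt → ℝ≥0∞ := fun y => k y + N.indicator (fun _ => ⊤) y with hk'
  have hk'm : Measurable k' := hk.add (measurable_const.indicator hNm)
  have hk'ε : ∫⁻ y, k' y ^ p ∂μt ≤ ε := by
    refine (lintegral_congr_ae ?_).trans_le hkε
    filter_upwards [measure_eq_zero_iff_ae_notMem.1 hN0] with y hy
    rw [hk']
    simp only [indicator_of_notMem hy, add_zero]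
  obtain ⟨G, hG, hkG, hGε⟩ := exists_le_comp_lintegral_rpow_le hπ hfib hμt hk'm hp0
  have hGtop : ∀ γ : UPath Tt, γ.integral (G ∘ π) ≠ ⊤ →
      edist (f γ.start) (f γ.finish) ≤ γ.integral (ρ ∘ π) := by
    intro γ hγ
    by_contra hne
    refine hγ (top_le_iff.1 ((hktop γ hne).symm.le.trans (lintegral_mono fun t => ?_)))
    exact le_self_add.trans (hkG _)
  have hE : ∫⁻ x, (ρ + G) x ^ p ∂μ < C' := by
    refine lt_of_le_of_lt ?_ hεC
    have h1 := ENNReal.lintegral_Lp_add_le hρ.aemeasurable hG.aemeasurable hp.le (μ := μ)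
    have h2 := ENNReal.rpow_le_rpow h1 hp0.le
    rw [← ENNReal.rpow_mul, one_div_mul_cancel hp0.ne', ENNReal.rpow_one] at h2
    refine h2.trans ?_
    gcongr
    exact hGε.trans hk'ε
  obtain ⟨q, hq, hqlsc, hqint⟩ := exists_le_lowerSemicontinuous_lintegral_ge μ
    (fun x => (ρ + G) x ^ p) ((hρ.add hG).pow_const p) (tsub_pos_of_lt hC2).ne'
  have hle : ∀ x, ρ x + G x ≤ q x ^ (1 / p) := fun x => by
    refine le_trans (le_of_eq ?_) (ENNReal.rpow_le_rpow (hq x) (one_div_nonneg.2 hp0.le))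
    rw [← ENNReal.rpow_mul, mul_one_div_cancel hp0.ne', ENNReal.rpow_one, Pi.add_apply]
  refine ⟨fun x => q x ^ (1 / p), ?_, ?_, fun γ => ?_, fun y hy => ?_⟩
  · exact ENNReal.continuous_rpow_const.comp_lowerSemicontinuous hqlsc
      (ENNReal.monotone_rpow_of_nonneg (one_div_nonneg.2 hp0.le))
  · simp_rw [← ENNReal.rpow_mul, one_div_mul_cancel hp0.ne', ENNReal.rpow_one]
    refine hqint.trans ((add_le_add hE.le le_rfl).trans_eq ?_)
    exact add_tsub_cancel_of_le hC2.le
  · by_cases hγ : γ.integral (G ∘ π) = ⊤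
    · refine le_top.trans (hγ.symm.le.trans (lintegral_mono fun t => ?_))
      exact le_add_self.trans (hle _)
    · refine (hGtop γ hγ).trans (lintegral_mono fun t => ?_)
      exact le_self_add.trans (hle _)
  · by_contra hne
    have hyN : y ∈ N := subset_toMeasurable _ _ fun hy' => hne (by linarith)
    refine hy (top_le_iff.1 (le_trans ?_ (hle _)))
    refine le_trans ?_ (le_add_self.trans' (hkG y))
    simp only [hk', indicator_of_mem hyN, add_top, le_refl]

/-- Every element of the class `F` has at least the energy of the capacity. -/
lemma cap_le_capF [PathConnectedSpace T] [LocallyPathConnectedSpace T]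
    {C : ℝ≥0} (hC : ∀ (x : T) (r : ℝ), 0 < r → μ (ball x (2 * r)) ≤ C * μ (ball x r))
    {CP lP : ℝ} (hP : SupportsPoincare μ CP lP) (hcov : CoverSetup π) (hgen : IsGenerator x₀ α₀)
    (hdeck : IsDeck π x₀ α₀ τ) (hμt : IsLiftedMeasure π μ μt) (hp : 1 < p)
    {g : T → UnitAddCircle} (hg : DegOneLip x₀ α₀ g) : cap μ p x₀ α₀ ≤ capF μ π τ μt p := by
  refine le_iInf₂ fun ρ hρ => ?_
  obtain ⟨hρm, f, -, hfτ, hf⟩ := hρ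
  obtain ⟨h, hc, hl, hτ⟩ := exists_lift_of_hasDegree_one hcov hdeck hg.2
  have : Nonempty Tt := ⟨(hcov.2.1 x₀).choose⟩
  refine le_of_forall_gt_imp_ge_of_dense fun D hD => ?_
  obtain rfl | hDtop := eq_or_ne D ⊤
  · exact le_top
  obtain ⟨ρ', hlsc, hρ'D, hug, hτ'⟩ := exists_lowerSemicontinuous_isUpperGradient
    hcov.1.isLocalHomeomorph (countable_fiber hcov hgen hdeck hc hg.2.1 hl hτ) hμt hp hρm hfτ hf hD
  exact (cap_le_lintegral_of_lowerSemicontinuous hC hP hcov hgen hdeck hp hg hlsc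
    (ne_top_of_le_ne_top hDtop hρ'D) hug hτ').trans hρ'D

end

end

end Duality

open Duality in
/-- **Proposition 4.3:** `cap_p T = cap_p^F T`. -/
theorem statement7
    (T : Type) [MetricSpace T] [MeasurableSpace T] [BorelSpace T] [CompactSpace T]
    (Tt : Type) [MetricSpace Tt] [MeasurableSpace Tt] [BorelSpace Tt]
    (μ : Measure T) (μt : Measure Tt) (Cμ : ℝ≥0∞) (CP lP : ℝ)
    (x₀ : T) (α₀ : Path x₀ x₀) (π : Tt → T) (τ : Tt → Tt)
    (hst : Standing μ Cμ CP lP x₀ α₀)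
    (hcov : CoverSetup π) (hdeck : IsDeck π x₀ α₀ τ)
    (hμt : IsLiftedMeasure π μ μt)
    (p : ℝ) (hp : 1 < p) :
    cap μ p x₀ α₀ = capF μ π τ μt p := by
  obtain ⟨hdoub, hP, -, hgen, g, hg⟩ := hst
  have hfin : IsFiniteMeasure μ := by
    refine ⟨(measure_mono fun y _ => ?_).trans_lt
      (hP.1 x₀ (diam (univ : Set T) + 1) (by positivity)).2⟩
    exact (dist_le_diam_of_mem isCompact_univ.isBounded (mem_univ y) (mem_univ x₀)).trans_lt
      (lt_add_one _)
  obtain ⟨C, hC⟩ := exists_doubling_constant hdoub x₀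
  obtain ⟨K, hK⟩ := exists_uPath_length_le hC hP
  have : Nonempty T := ⟨x₀⟩
  have : PathConnectedSpace T := pathConnectedSpace_of_exists_uPath hK
  have : LocallyPathConnectedSpace T := locallyPathConnectedSpace_of_exists_uPath hK
  exact le_antisymm (cap_le_capF hC hP hcov hgen hdeck hμt hp hg)
    (capF_le_cap hcov hgen hdeck hμt (by linarith))
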